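/- arXiv:1709.02006 — 4 statements merged into one kernel-verified Lean document; each statement's English description precedes it below -/
import Mathlib

section
/- With C = u²v²w²μ⁹, let κ be the k-automorphism of K_C of order 2 determined by κ(X) = −X, κ(Y) = −Y, κ(T) = −T (an involution of type 2 in the paper's Table 2). Then the fixed field of ⟨κ⟩ acting on K_C is not k-rational. -/
/-!
The fixed field of `κ` is `k(p, s, t₀)` with `p = x / y`, `s = y²`, `t₀ = t / y`
(`fixedField_eq_adjoin`). It is the function field of a Châtelet surface
`X'² - μ Y'² = (m - e)(m + e)(m - b² e)(m + b² e)`, where `b = (u + i v) / w`, `e = i u v` and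
`m = (x² + b² y²) / μ⁴`. Indeed, the quartic form splits as `μ w² (x² + a² y²)(x² + b² y²)` with
`a = 1 / b`, so that the quotient is a conic bundle over the `m`-line (`conic_relation`); the conic
`N₁ Z² - N₂ Y² = m x²` over `k(m)`, with `N₁ = m² - e²` and `N₂ = m² - b⁴ e²`, has an explicit point
(`conic_point`), and it turns the conic bundle into the norm form `X'² - μ Y'² = N₁ N₂`
(`chatelet_relation`).

A Châtelet surface `X'² - μ Y'² = ∏ (z - eᵢ)` with four distinct roots in `k` and `μ` not a square is
not `k`-rational (`chatelet_not_rational`), since the quaternion algebra `(μ, (z - e₁)(z - e₂))` is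
unramified but not constant. This is expressed through norms from `L = k(√μ)`. If the function field
were `k(s₁, s₂)`, then, writing `z = n / d` in lowest terms, the product `∏ (n - eᵢ d)` would be a
norm up to squares; by unique factorisation in `k[s₁, s₂]` and `L[s₁, s₂]` the factor
`(n - e₁ d)(n - e₂ d)`, coprime to the other one, would be a norm up to a constant
(`pair_of_roots_normClass`). On the other hand, over `L` the function field is `L(z, U)` with
`U = X' + √μ Y'`, and conjugation sends `U` to `∏ (z - eᵢ) / U`. An element of `L(z)` that is a norm
from `L(z, U)` is a norm from `L(z)` times a power of `∏ (z - eᵢ)` (`pow_eq_norm_of_norm_eq`), and the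
multiplicities at `e₁` and `e₃` exclude this for `c (z - e₁)(z - e₂)` (`four_roots_parity`).
-/

/-- A field extension `K` of `k` (of transcendence degree 2) is *k-rational* if it is
isomorphic as a `k`-algebra to the field of rational functions in two variables over `k`. -/
def IsKRational (k : Type*) (K : Type*) [Field k] [Field K] [Algebra k K] : Prop :=
  Nonempty (K ≃ₐ[k] FractionRing (MvPolynomial (Fin 2) k))

universe u

/-! ### Polynomials over a quadratic extension -/

open MvPolynomial in
lemma mvPoly_conj_map {k L : Type*} [Field k] [Field L] [Algebra k L]
    (σ : L ≃ₐ[k] L) (g : MvPolynomial (Fin 2) k) :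
    map (σ : L →+* L) (map (algebraMap k L) g) = map (algebraMap k L) g := by
  rw [map_map]
  congr 2
  exact RingHom.ext fun a => σ.commutes a

open MvPolynomial in
/-- Galois descent for polynomials: conjugation-invariant coefficients lie in `k`. -/
lemma mvPoly_fixed_mem_range {k L : Type*} [Field k] [Field L] [Algebra k L]
    (σ : L ≃ₐ[k] L) (hfix : ∀ a, σ a = a → a ∈ Set.range (algebraMap k L))
    (f : MvPolynomial (Fin 2) L) (hf : map (σ : L →+* L) f = f) :
    ∃ g : MvPolynomial (Fin 2) k, map (algebraMap k L) g = f := by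
  have : f ∈ Set.range (map (algebraMap k L) : MvPolynomial (Fin 2) k →+* _) := by
    rw [mem_range_map_iff_coeffs_subset]
    intro a ha
    obtain ⟨n, -, rfl⟩ := mem_coeffs_iff.1 ha
    apply hfix
    conv_rhs => rw [← hf]
    simp [coeff_map]
  exact this

open MvPolynomial in
lemma mvPoly_map_dvd_iff {k L : Type*} [Field k] [Field L] [Algebra k L]
    (σ : L ≃ₐ[k] L) (hfix : ∀ a, σ a = a → a ∈ Set.range (algebraMap k L))
    (f g : MvPolynomial (Fin 2) k) :
    map (algebraMap k L) f ∣ map (algebraMap k L) g ↔ f ∣ g := by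
  have inj : Function.Injective (map (algebraMap k L) : MvPolynomial (Fin 2) k →+* _) :=
    map_injective _ (algebraMap k L).injective
  have hσ : ∀ g : MvPolynomial (Fin 2) k,
      map (σ : L →+* L) (map (algebraMap k L) g) = map (algebraMap k L) g := mvPoly_conj_map σ
  constructor
  · rintro ⟨c, hc⟩
    by_cases hf : f = 0
    · subst hf
      simp only [map_zero, zero_mul] at hc
      rw [inj (hc.trans (map_zero _).symm)]
    have hf' : map (algebraMap k L) f ≠ 0 := by
      rwa [Ne, map_eq_zero_iff _ inj]
    obtain ⟨d, rfl⟩ := mvPoly_fixed_mem_range σ hfix c (by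
      apply mul_left_cancel₀ hf'
      have := congrArg (map (σ : L →+* L)) hc
      rw [hσ, map_mul, hσ, hc] at this
      exact this.symm)
    exact ⟨d, inj (by rw [hc, map_mul])⟩
  · exact fun h => map_dvd _ h

open MvPolynomial in
lemma mvPoly_norm_mem {k L : Type*} [Field k] [Field L] [Algebra k L]
    (σ : L ≃ₐ[k] L) (hσσ : ∀ a, σ (σ a) = a)
    (hfix : ∀ a, σ a = a → a ∈ Set.range (algebraMap k L))
    (f : MvPolynomial (Fin 2) L) :
    ∃ g : MvPolynomial (Fin 2) k, map (algebraMap k L) g = f * map (σ : L →+* L) f := by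
  apply mvPoly_fixed_mem_range σ hfix
  have : map (σ : L →+* L) (map (σ : L →+* L) f) = f := by
    rw [map_map]
    convert map_id f
    ext a
    simpa using hσσ a
  rw [map_mul, this, mul_comm]

open MvPolynomial in
/-- A prime of `k[s₁, s₂]` either stays prime over the quadratic extension `L` or is, up to a
constant, a norm. -/
lemma mvPoly_prime_alternative {k L : Type*} [Field k] [Field L] [Algebra k L]
    (σ : L ≃ₐ[k] L) (hσσ : ∀ a, σ (σ a) = a)
    (hfix : ∀ a, σ a = a → a ∈ Set.range (algebraMap k L))
    (π : MvPolynomial (Fin 2) k) (hπ : Prime π) :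
    Prime (map (algebraMap k L) π) ∨
      ∃ (c : k) (ρ : MvPolynomial (Fin 2) L), c ≠ 0 ∧
        map (algebraMap k L) (C c * π) = ρ * map (σ : L →+* L) ρ := by
  have inj : Function.Injective (map (algebraMap k L) : MvPolynomial (Fin 2) k →+* _) :=
    map_injective _ (algebraMap k L).injective
  have hunit : ∀ g : MvPolynomial (Fin 2) k, IsUnit (map (algebraMap k L) g) → IsUnit g := by
    intro g hg
    rw [isUnit_iff_dvd_one, ← map_one (map (algebraMap k L)), mvPoly_map_dvd_iff σ hfix] at hg
    exact isUnit_iff_dvd_one.2 hg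
  obtain ⟨ρ, hρ, η, hη⟩ := WfDvdMonoid.exists_irreducible_factor
    (fun h => hπ.not_isUnit (hunit _ h)) (by
      rw [Ne, map_eq_zero_iff _ inj]; exact hπ.ne_zero)
  obtain ⟨n, hn⟩ := mvPoly_norm_mem σ hσσ hfix ρ
  obtain ⟨m, hm⟩ := mvPoly_norm_mem σ hσσ hfix η
  have hσπ : map (σ : L →+* L) (map (algebraMap k L) π) = map (algebraMap k L) π := mvPoly_conj_map σ _
  have hnm : n * m = π ^ 2 := by
    apply inj
    rw [map_mul, hn, hm, pow_two, map_mul]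
    nth_rewrite 2 [← hσπ]
    rw [hη, map_mul]
    ring
  obtain ⟨j, hj, hass⟩ := (dvd_prime_pow hπ 2).1 (Dvd.intro _ hnm)
  interval_cases j
  · exfalso
    apply hρ.not_isUnit
    have h1 : IsUnit n := by simpa using hass
    have := h1.map (map (algebraMap k L))
    rw [hn] at this
    exact isUnit_of_mul_isUnit_left this
  · right
    rw [pow_one] at hass
    obtain ⟨e, he⟩ := hass.symm
    obtain ⟨c, hc, hce⟩ := (isUnit_iff_eq_C_of_isReduced).1 e.isUnit
    refine ⟨c, ρ, hc.ne_zero, ?_⟩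
    rw [← hn, ← he, hce, mul_comm]
  · left
    have h1 : IsUnit m := by
      obtain ⟨e, he⟩ := hass
      have : n * m = n * e := by rw [hnm, he]
      have hn0 : n ≠ 0 := by
        rintro rfl
        simp at hnm
        exact hπ.ne_zero (by simpa using hnm.symm)
      rw [mul_left_cancel₀ hn0 this]
      exact e.isUnit
    have := h1.map (map (algebraMap k L))
    rw [hm] at this
    have hηu := isUnit_of_mul_isUnit_left this
    rw [hη]
    exact (associated_mul_unit_right ρ η hηu).prime hρ.prime

/-! ### Norms up to constants and squares -/

open MvPolynomial in
/-- `f` is a norm from `L(s₁, s₂)` to `k(s₁, s₂)` up to a nonzero constant of `k`. Denominators are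
cleared, which is why a square `d ^ 2` is allowed next to `f`. In terms of `L = k(√μ)` this says
that the quaternion algebra `(μ, f)` is constant. -/
def NormClass {k L : Type*} [Field k] [Field L] [Algebra k L] (σ : L ≃ₐ[k] L)
    (f : MvPolynomial (Fin 2) k) : Prop :=
  ∃ (c : k) (d : MvPolynomial (Fin 2) k) (β : MvPolynomial (Fin 2) L), c ≠ 0 ∧ d ≠ 0 ∧
    map (algebraMap k L) (C c * f * d ^ 2) = β * map (σ : L →+* L) β

open MvPolynomial in
lemma NormClass.of_mul {k L : Type*} [Field k] [Field L] [Algebra k L] {σ : L ≃ₐ[k] L}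
    {f g : MvPolynomial (Fin 2) k} (hf0 : f ≠ 0) (hf : NormClass σ f) (hfg : NormClass σ (f * g)) :
    NormClass σ g := by
  obtain ⟨c, d, β, hc, hd, h⟩ := hf
  obtain ⟨c', d', β', hc', hd', h'⟩ := hfg
  refine ⟨c * c', f * d * d', β * β', mul_ne_zero hc hc', mul_ne_zero (mul_ne_zero hf0 hd) hd', ?_⟩
  simp only [map_mul, map_pow, map_C] at h h' ⊢
  rw [mul_mul_mul_comm β β', ← h, ← h']
  ring

open MvPolynomial in
lemma NormClass.mul {k L : Type*} [Field k] [Field L] [Algebra k L] {σ : L ≃ₐ[k] L}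
    {f g : MvPolynomial (Fin 2) k} (hf : NormClass σ f) (hfg : NormClass σ g) :
    NormClass σ (f * g) := by
  obtain ⟨c, d, β, hc, hd, h⟩ := hf
  obtain ⟨c', d', β', hc', hd', h'⟩ := hfg
  refine ⟨c * c', d * d', β * β', mul_ne_zero hc hc', mul_ne_zero hd hd', ?_⟩
  simp only [map_mul, map_pow, map_C] at h h' ⊢
  rw [mul_mul_mul_comm β β', ← h, ← h']
  ring

open MvPolynomial in
lemma NormClass.sq {k L : Type*} [Field k] [Field L] [Algebra k L] {σ : L ≃ₐ[k] L}
    (f : MvPolynomial (Fin 2) k) : NormClass σ (f ^ 2) := by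
  refine ⟨1, 1, map (algebraMap k L) f, one_ne_zero, one_ne_zero, ?_⟩
  have hσ : map (σ : L →+* L) (map (algebraMap k L) f) = map (algebraMap k L) f := mvPoly_conj_map σ _
  rw [hσ, ← map_mul]
  congr 1
  simp [pow_two]

open MvPolynomial in
/-- A prime that stays prime over `L` has even multiplicity in a norm; only the first step,
`π ∣ f → π ^ 2 ∣ f`, is needed. -/
lemma NormClass.sq_dvd_of_inert {k L : Type*} [Field k] [Field L] [Algebra k L] {σ : L ≃ₐ[k] L}
    (hfix : ∀ a, σ a = a → a ∈ Set.range (algebraMap k L))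
    {π f : MvPolynomial (Fin 2) k} (hf0 : f ≠ 0) (hπ : Prime (map (algebraMap k L) π))
    (hf : NormClass σ f) (hdvd : π ∣ f) : π ^ 2 ∣ f := by
  obtain ⟨c, d, β, hc, hd, h⟩ := hf
  have inj : Function.Injective (map (algebraMap k L) : MvPolynomial (Fin 2) k →+* _) :=
    map_injective _ (algebraMap k L).injective
  set ι : MvPolynomial (Fin 2) k →+* MvPolynomial (Fin 2) L := map (algebraMap k L) with hι
  have hβ : β ≠ 0 := by
    rintro rfl
    rw [zero_mul, map_eq_zero_iff _ inj] at h
    simp [hc, hf0, hd] at h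
  have hσπ : map (σ : L →+* L) (ι π) = ι π := mvPoly_conj_map σ _
  have hσβ : emultiplicity (ι π) (map (σ : L →+* L) β) = emultiplicity (ι π) β := by
    have := emultiplicity_map_eq (mapEquiv (Fin 2) (σ : L ≃+* L)) (a := ι π) (b := β)
    rw [← this]
    congr 1
    exact hσπ.symm
  by_contra hcon
  have hf1 : emultiplicity (ι π) (ι f) = 1 := by
    rw [show (1 : ℕ∞) = (1 : ℕ) from rfl, emultiplicity_eq_coe, ← map_pow, ← map_pow,
      mvPoly_map_dvd_iff σ hfix, mvPoly_map_dvd_iff σ hfix]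
    exact ⟨by simpa using hdvd, hcon⟩
  have hc1 : emultiplicity (ι π) (ι (C c)) = 0 := by
    rw [emultiplicity_eq_zero]
    intro hd
    apply hπ.not_isUnit
    refine isUnit_of_dvd_unit hd ((IsUnit.map C (isUnit_iff_ne_zero.2 hc)).map ι)
  have hfinβ : FiniteMultiplicity (ι π) β := FiniteMultiplicity.of_prime_left hπ hβ
  have hfind : FiniteMultiplicity (ι π) (ι d) := FiniteMultiplicity.of_prime_left hπ
    (by rwa [Ne, map_eq_zero_iff _ inj])
  have key := congrArg (emultiplicity (ι π)) h
  rw [emultiplicity_mul hπ, hσβ, map_mul, map_mul, emultiplicity_mul hπ, emultiplicity_mul hπ,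
    hf1, hc1, map_pow, emultiplicity_pow hπ, hfinβ.emultiplicity_eq_multiplicity,
    hfind.emultiplicity_eq_multiplicity] at key
  norm_cast at key
  omega

open MvPolynomial in
/-- Coprime factors of a norm are norms, always up to constants and squares: inert primes occur in
each factor to an even power, and the other primes are norms themselves. This replaces the
statement that an unramified class in the Brauer group of `k(s₁, s₂)` is constant. -/
lemma NormClass.of_coprime_mul {k L : Type*} [Field k] [Field L] [Algebra k L] {σ : L ≃ₐ[k] L}
    (hσσ : ∀ a, σ (σ a) = a)
    (hfix : ∀ a, σ a = a → a ∈ Set.range (algebraMap k L))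
    {H : MvPolynomial (Fin 2) k} (hH : H ≠ 0) (G : MvPolynomial (Fin 2) k) (hG : G ≠ 0)
    (hcop : ∀ π, Prime π → π ∣ G → ¬ π ∣ H) (hGH : NormClass σ (G * H)) : NormClass σ G := by
  induction G using (wellFounded_dvdNotUnit (α := MvPolynomial (Fin 2) k)).induction with
  | h G ih =>
  by_cases hu : IsUnit G
  · obtain ⟨c, hc, rfl⟩ := (isUnit_iff_eq_C_of_isReduced).1 hu
    refine ⟨c⁻¹, 1, 1, inv_ne_zero hc.ne_zero, one_ne_zero, ?_⟩
    rw [← C_mul, inv_mul_cancel₀ hc.ne_zero]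
    simp
  obtain ⟨π, hπ, G', rfl⟩ := WfDvdMonoid.exists_irreducible_factor hu hG
  have hG' : G' ≠ 0 := right_ne_zero_of_mul hG
  have hπ0 := hπ.ne_zero
  rcases mvPoly_prime_alternative σ hσσ hfix π hπ.prime with hin | ⟨c, ρ, hc, hρ⟩
  · have h2 := NormClass.sq_dvd_of_inert hfix (mul_ne_zero hG hH) hin hGH
      ((Dvd.intro _ rfl).mul_right H)
    rw [pow_two, mul_assoc, mul_dvd_mul_iff_left hπ0] at h2
    have h3 : π ∣ G' := (hπ.prime.dvd_or_dvd h2).resolve_right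
      (hcop π hπ.prime (Dvd.intro _ rfl))
    obtain ⟨G'', rfl⟩ := h3
    have hG'' : G'' ≠ 0 := right_ne_zero_of_mul hG'
    rw [← mul_assoc, ← pow_two]
    refine (NormClass.sq π).mul (ih G'' ⟨hG'', π * π, ?_, by ring⟩ hG'' ?_ ?_)
    · exact fun h => hπ.not_isUnit (isUnit_of_mul_isUnit_left h)
    · exact fun p hp hpG => hcop p hp ((hpG.mul_left π).mul_left π)
    · exact (NormClass.sq π).of_mul (pow_ne_zero 2 hπ0) (by convert hGH using 1; ring)
  · have hπN : NormClass σ π := ⟨c, 1, ρ, hc, one_ne_zero, by rw [one_pow, mul_one, hρ]⟩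
    refine hπN.mul (ih G' ⟨hG', π, hπ.not_isUnit, by ring⟩ hG' ?_ ?_)
    · exact fun p hp hpG => hcop p hp (hpG.mul_left π)
    · exact hπN.of_mul hπ0 (by rwa [← mul_assoc])

/-! ### Norms from the function field of a conic -/

open Polynomial in
/-- The polynomial `X ^ N * f^σ(P / X)`, for `f` of degree at most `N`. If `τ` extends `σ` and
`τ U = P / U`, it represents `U ^ N * τ (f U)` as a polynomial in `U`. -/
noncomputable def twist {M : Type*} [Field M] (σ : M →+* M) (P : M) (N : ℕ) (f : M[X]) : M[X] :=
  reflect N ((f.map σ).comp (C P * X))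

open Polynomial in
lemma twist_coeff {M : Type*} [Field M] (σ : M →+* M) (P : M) (N : ℕ) (f : M[X]) (n : ℕ) :
    (twist σ P N f).coeff n = σ (f.coeff (revAt N n)) * P ^ (revAt N n) := by
  rw [twist, coeff_reflect, comp_C_mul_X_coeff, coeff_map]

open Polynomial in
lemma twist_natDegree_le {M : Type*} [Field M] (σ : M →+* M) (P : M) {N : ℕ} {f : M[X]}
    (hf : f.natDegree ≤ N) : (twist σ P N f).natDegree ≤ N := by
  rw [natDegree_le_iff_coeff_eq_zero]
  intro n hn
  rw [twist_coeff, revAt_eq_self_of_lt hn, coeff_eq_zero_of_natDegree_lt (hf.trans_lt hn)]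
  simp

open Polynomial in
lemma twist_twist {M : Type*} [Field M] (σ : M →+* M) (hσσ : ∀ a, σ (σ a) = a) {P : M}
    (hσP : σ P = P) {N : ℕ} {f : M[X]} (hf : f.natDegree ≤ N) :
    twist σ P N (twist σ P N f) = C (P ^ N) * f := by
  ext n
  rw [twist_coeff, twist_coeff, coeff_C_mul, revAt_invol, map_mul, hσσ, map_pow, hσP]
  by_cases hn : n ≤ N
  · rw [mul_assoc, ← pow_add, revAt_le hn, Nat.add_sub_cancel' hn, mul_comm]
  · rw [coeff_eq_zero_of_natDegree_lt (hf.trans_lt (not_le.1 hn))]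
    simp

open Polynomial in
lemma twist_C_mul {M : Type*} [Field M] (σ : M →+* M) (P : M) (N : ℕ) (c : M) (f : M[X]) :
    twist σ P N (C c * f) = C (σ c) * twist σ P N f := by
  ext n
  simp only [twist_coeff, coeff_C_mul, map_mul, mul_assoc]

open Polynomial in
lemma aeval_twist {M Ω : Type*} [Field M] [Field Ω] [Algebra M Ω] (σ : M →+* M) (τ : Ω →+* Ω)
    (hτ : ∀ m, τ (algebraMap M Ω m) = algebraMap M Ω (σ m)) {U : Ω} (hU : U ≠ 0) {P : M}
    (hτU : U * τ U = algebraMap M Ω P) {N : ℕ} {f : M[X]} (hf : f.natDegree ≤ N) :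
    aeval U (twist σ P N f) = U ^ N * τ (aeval U f) := by
  have hU' : U⁻¹ ≠ 0 := inv_ne_zero hU
  let : Invertible (U⁻¹) := invertibleOfNonzero hU'
  have h1 : ⅟(U⁻¹) = U := by rw [invOf_eq_inv, inv_inv]
  have hτU' : τ U = algebraMap M Ω P * U⁻¹ := by
    rw [← hτU]; field_simp
  have hdeg : ((f.map σ).comp (C P * X)).natDegree ≤ N := by
    refine natDegree_comp_le.trans ?_
    calc _ ≤ f.natDegree * 1 := Nat.mul_le_mul natDegree_map_le
          ((natDegree_C_mul_le _ _).trans natDegree_X_le)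
      _ ≤ N := by simpa using hf
  have h2 := eval₂_reflect_mul_pow (algebraMap M Ω) (U⁻¹) N _ hdeg
  rw [h1] at h2
  have h3 : τ (aeval U f) = eval₂ (algebraMap M Ω) U⁻¹ ((f.map σ).comp (C P * X)) := by
    rw [eval₂_comp, eval₂_map, aeval_def, hom_eval₂]
    congr 1
    · exact RingHom.ext hτ
    · simp [hτU']
  rw [h3, ← h2, aeval_def, twist, mul_left_comm, ← mul_pow, mul_inv_cancel₀ hU, one_pow,
    mul_one]

open Polynomial in
/-- Let `τ` act on `M(U)` by `σ` on `M` and by `τ U = P / U`. If `g ∈ M` is a norm `h * τ h` with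
`h ∈ M(U)`, then `g` is a norm from `M` up to a power of `P`. Writing `h = r / s` in lowest terms,
the equation `r r^τ = g s s^τ` forces `r` and the twist of `s` to agree up to a constant `c`.
This is the description of the kernel of the map from the Brauer group of a field to that of the
function field of a conic. -/
lemma pow_eq_norm_of_norm_eq {M Ω : Type*} [Field M] [Field Ω] [Algebra M Ω] (σ : M →+* M)
    (hσσ : ∀ a, σ (σ a) = a) (τ : Ω →+* Ω)
    (hτ : ∀ m, τ (algebraMap M Ω m) = algebraMap M Ω (σ m)) {U : Ω} (hU : Transcendental M U)
    {P : M} (hσP : σ P = P) (hτU : U * τ U = algebraMap M Ω P) {g : M} (hg : g ≠ 0)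
    (r s : M[X])
    (hh : aeval U r / aeval U s * τ (aeval U r / aeval U s) = algebraMap M Ω g) :
    ∃ (N : ℕ) (c : M), P ^ N = g * (c * σ c) := by
  classical
  have hU0 : U ≠ 0 := by
    rintro rfl
    exact hU (isAlgebraic_zero)
  have inj : Function.Injective (aeval U : M[X] →ₐ[M] Ω) := transcendental_iff_injective.1 hU
  have hP : P ≠ 0 := by
    rintro rfl
    rw [map_zero, mul_eq_zero, map_eq_zero] at hτU
    simp [hU0] at hτU
  have hg' : algebraMap M Ω g ≠ 0 := by simpa using hg
  have hs : s ≠ 0 := by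
    rintro rfl
    simp at hh
    exact hg' hh.symm
  let := EuclideanDomain.gcdMonoid M[X]
  have hcop := isCoprime_div_gcd_div_gcd (p := r) hs
  have hr1 := EuclideanDomain.mul_div_cancel' (gcd_ne_zero_of_right hs) (gcd_dvd_left r s)
  have hs1 := EuclideanDomain.mul_div_cancel' (gcd_ne_zero_of_right hs) (gcd_dvd_right r s)
  have hd : gcd r s ≠ 0 := gcd_ne_zero_of_right hs
  set d := gcd r s
  set r' := r / d
  set s' := s / d
  have hs' : s' ≠ 0 := by rintro h; rw [h, mul_zero] at hs1; exact hs hs1.symm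
  have hd' : aeval U d ≠ 0 := by rwa [Ne, map_eq_zero_iff _ inj]
  have hsU : aeval U s' ≠ 0 := by rwa [Ne, map_eq_zero_iff _ inj]
  have hq : aeval U r / aeval U s = aeval U r' / aeval U s' := by
    rw [← hr1, ← hs1, map_mul, map_mul, mul_div_mul_left _ _ hd']
  have hτs : τ (aeval U s') ≠ 0 := by rwa [Ne, map_eq_zero]
  rw [hq, map_div₀, div_mul_div_comm, div_eq_iff (mul_ne_zero hsU hτs)] at hh
  set N := max r'.natDegree s'.natDegree with hN
  have hrN : r'.natDegree ≤ N := le_max_left _ _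
  have hsN : s'.natDegree ≤ N := le_max_right _ _
  have key : r' * twist σ P N r' = C g * (s' * twist σ P N s') := by
    apply inj
    simp only [map_mul, aeval_twist σ τ hτ hU0 hτU hrN, aeval_twist σ τ hτ hU0 hτU hsN, aeval_C]
    linear_combination U ^ N * hh
  have hr'0 : r' ≠ 0 := by
    rintro h
    rw [h] at hh
    simp [hg, hsU] at hh
  have hdvd : r' ∣ twist σ P N s' := by
    have h1 : r' ∣ C g * (s' * twist σ P N s') := Dvd.intro _ key
    have hu : IsUnit (C g : M[X]) := isUnit_C.2 (isUnit_iff_ne_zero.2 hg)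
    exact hcop.dvd_of_dvd_mul_left (hu.dvd_mul_left.1 h1)
  obtain ⟨q, hq⟩ := hdvd
  have htw : twist σ P N r' = C g * (s' * q) := by
    apply mul_left_cancel₀ hr'0
    rw [key, hq]; ring
  have hq0 : q ≠ 0 := by
    rintro rfl
    have := twist_twist σ hσσ hσP hsN
    rw [hq, mul_zero] at this
    have h0 : twist σ P N (0 : M[X]) = 0 := by simp [twist]
    rw [h0] at this
    simp [hP, hs'] at this
  have hdeg1 : r'.natDegree + q.natDegree ≤ N := by
    rw [← natDegree_mul hr'0 hq0, ← hq]; exact twist_natDegree_le σ P hsN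
  have hdeg2 : s'.natDegree + q.natDegree ≤ N := by
    rw [← natDegree_mul hs' hq0, ← natDegree_C_mul hg, ← htw]; exact twist_natDegree_le σ P hrN
  have hq1 : q.natDegree = 0 := by omega
  obtain ⟨c, rfl⟩ := natDegree_eq_zero.1 hq1
  refine ⟨N, c, ?_⟩
  have := twist_twist σ hσσ hσP hsN
  rw [hq, mul_comm r', twist_C_mul, htw] at this
  have h2 : C (P ^ N) * s' = C (g * (c * σ c)) * s' := by
    rw [← this]
    simp only [C_mul]
    ring
  exact C_injective (mul_right_cancel₀ hs' h2)

open Polynomial in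
/-- No power of `∏ (X - eᵢ)` equals `c (X - e₁)(X - e₂)` modulo norms: comparing multiplicities,
the root `e₁` requires `N` odd and the root `e₃` requires `N` even. -/
lemma four_roots_parity {L : Type*} [Field L] (σ : L →+* L)
    {e₁ e₂ e₃ e₄ c : L} (h₁ : σ e₁ = e₁) (h₃ : σ e₃ = e₃)
    (h₁₂ : e₁ ≠ e₂) (h₁₃ : e₁ ≠ e₃) (h₁₄ : e₁ ≠ e₄) (h₂₃ : e₂ ≠ e₃) (h₃₄ : e₃ ≠ e₄)
    (hc : c ≠ 0) (N : ℕ) (r s : L[X]) (hr : r ≠ 0) (hs : s ≠ 0)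
    (h : ((X - C e₁) * (X - C e₂) * (X - C e₃) * (X - C e₄)) ^ N * (s * s.map σ) =
      C c * ((X - C e₁) * (X - C e₂)) * (r * r.map σ)) : False := by
  classical
  have hr' : r.map σ ≠ 0 := (Polynomial.map_ne_zero_iff σ.injective).2 hr
  have hs' : s.map σ ≠ 0 := (Polynomial.map_ne_zero_iff σ.injective).2 hs
  have hX : ∀ e : L, X - C e ≠ 0 := X_sub_C_ne_zero
  have hc' : (C c : L[X]) ≠ 0 := C_ne_zero.2 hc
  have key : ∀ a, σ a = a →
      N * (rootMultiplicity a (X - C e₁) + rootMultiplicity a (X - C e₂) +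
        rootMultiplicity a (X - C e₃) + rootMultiplicity a (X - C e₄)) +
        2 * rootMultiplicity a s = rootMultiplicity a (X - C e₁) + rootMultiplicity a (X - C e₂) +
        2 * rootMultiplicity a r := by
    intro a ha
    have e := congrArg (fun p => p.roots.count a) h
    have hs2 : rootMultiplicity a (s.map σ) = rootMultiplicity a s := by
      rw [eq_rootMultiplicity_map σ.injective a (p := s), ha]
    have hr2 : rootMultiplicity a (r.map σ) = rootMultiplicity a r := by
      rw [eq_rootMultiplicity_map σ.injective a (p := r), ha]
    simp only [roots_mul, roots_pow, ne_eq, mul_eq_zero, pow_eq_zero_iff', hX, hr, hs, hr', hs', hc',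
      or_self, not_false_eq_true, false_and, roots_C_mul _ hc, Multiset.count_add,
      Multiset.count_nsmul, count_roots, hs2, hr2] at e
    linarith
  have k1 := key e₁ h₁
  have k3 := key e₃ h₃
  simp only [rootMultiplicity_X_sub_C, h₁₂, h₁₃, h₁₄, h₁₃.symm, h₂₃.symm, h₃₄, if_true, if_false]
    at k1 k3
  omega

open Polynomial IntermediateField in
/-- On the Châtelet surface `U * τ U = ∏ (z - eᵢ)`, no nonzero constant multiple of
`(z - e₁)(z - e₂)` is a norm. -/
lemma not_norm_of_four_roots {L Ω : Type*} [Field L] [Field Ω] [Algebra L Ω] (σ : L →+* L)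
    (τ : Ω →+* Ω) (hττ : ∀ a, τ (τ a) = a)
    (hτ : ∀ a, τ (algebraMap L Ω a) = algebraMap L Ω (σ a)) {z U : Ω} (hz : τ z = z)
    (hind : AlgebraicIndependent L ![z, U]) (hgen : adjoin L {z, U} = ⊤)
    {e₁ e₂ e₃ e₄ c : L} (h₁ : σ e₁ = e₁) (h₂ : σ e₂ = e₂) (h₃ : σ e₃ = e₃) (h₄ : σ e₄ = e₄)
    (h₁₂ : e₁ ≠ e₂) (h₁₃ : e₁ ≠ e₃) (h₁₄ : e₁ ≠ e₄) (h₂₃ : e₂ ≠ e₃) (h₃₄ : e₃ ≠ e₄)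
    (hτU : U * τ U = (z - algebraMap L Ω e₁) * (z - algebraMap L Ω e₂) *
      (z - algebraMap L Ω e₃) * (z - algebraMap L Ω e₄))
    (hc : c ≠ 0) (h : Ω)
    (hh : h * τ h = algebraMap L Ω c * ((z - algebraMap L Ω e₁) * (z - algebraMap L Ω e₂))) :
    False := by
  have hzt : Transcendental L z := hind.transcendental 0
  have injz : Function.Injective (aeval z : L[X] →ₐ[L] Ω) := transcendental_iff_injective.1 hzt
  have hUt : Transcendental (L⟮z⟯) U := by
    have h1 := hind.transcendental_adjoin (s := {0}) (i := 1) (by simp)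
    have h2 : (![z, U] '' {0}) = {z} := by simp
    rw [h2] at h1
    exact transcendental_adjoin_iff.2 h1
  have hτaeval : ∀ p : L[X], τ (aeval z p) = aeval z (p.map σ) := by
    intro p
    rw [aeval_def, hom_eval₂, aeval_def, eval₂_map, hz]
    congr 1
    exact RingHom.ext hτ
  have hτM : ∀ a ∈ L⟮z⟯, τ a ∈ L⟮z⟯ := by
    intro a ha
    obtain ⟨r, s, rfl⟩ := (mem_adjoin_simple_iff L a).1 ha
    rw [map_div₀, hτaeval, hτaeval]
    exact (mem_adjoin_simple_iff L _).2 ⟨_, _, rfl⟩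
  let σM : L⟮z⟯ →+* L⟮z⟯ :=
    (τ.comp (algebraMap L⟮z⟯ Ω)).codRestrict L⟮z⟯ (fun a => hτM a a.2)
  have hσM : ∀ a : L⟮z⟯, ((σM a : L⟮z⟯) : Ω) = τ a := fun a => rfl
  let zM : L⟮z⟯ := ⟨z, mem_adjoin_simple_self L z⟩
  let f : L → L⟮z⟯ := fun e => zM - algebraMap L L⟮z⟯ e
  have hf : ∀ e, ((f e : L⟮z⟯) : Ω) = z - algebraMap L Ω e := fun e => rfl
  have hf0 : ∀ e, f e ≠ 0 := by
    intro e he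
    have h1 : z - algebraMap L Ω e = 0 := by rw [← hf, he]; rfl
    apply hzt
    rw [sub_eq_zero.1 h1]
    exact isAlgebraic_algebraMap e
  have hσf : ∀ e, σ e = e → σM (f e) = f e := by
    intro e he
    apply Subtype.ext
    rw [hσM, hf, map_sub, hz, hτ, he]
  obtain ⟨r, s, hrs⟩ := (mem_adjoin_simple_iff L⟮z⟯ (α := U) h).1 (by
    have : h ∈ (L⟮z⟯⟮U⟯).restrictScalars L := by
      rw [adjoin_simple_adjoin_simple, hgen]; trivial
    exact this)
  obtain ⟨N, κ, hκ⟩ := pow_eq_norm_of_norm_eq σM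
    (fun a => Subtype.ext (by rw [hσM, hσM, hττ])) τ (fun m => (hσM m).symm) hUt
    (P := f e₁ * f e₂ * f e₃ * f e₄)
    (by simp only [map_mul, hσf _ h₁, hσf _ h₂, hσf _ h₃, hσf _ h₄]) hτU
    (g := algebraMap L L⟮z⟯ c * (f e₁ * f e₂))
    (mul_ne_zero (by simpa using hc) (mul_ne_zero (hf0 _) (hf0 _))) r s (by rw [← hrs]; exact hh)
  obtain ⟨p, q, hpq⟩ := (mem_adjoin_simple_iff L (κ : Ω)).1 κ.2
  have hκΩ := congrArg (algebraMap L⟮z⟯ Ω) hκ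
  have hκ' : ((z - algebraMap L Ω e₁) * (z - algebraMap L Ω e₂) *
      (z - algebraMap L Ω e₃) * (z - algebraMap L Ω e₄)) ^ N =
      algebraMap L Ω c * ((z - algebraMap L Ω e₁) * (z - algebraMap L Ω e₂)) *
      (κ * τ κ) := hκΩ
  have hκ0 : (κ : Ω) ≠ 0 := by
    intro h0
    rw [h0, zero_mul, mul_zero] at hκ'
    have := pow_ne_zero N (mul_ne_zero (mul_ne_zero (mul_ne_zero (hf0 e₁) (hf0 e₂)) (hf0 e₃))
      (hf0 e₄))
    exact this (Subtype.ext hκ')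
  have hp : p ≠ 0 := by rintro rfl; simp at hpq; exact hκ0 (by simpa using hpq)
  have hq : q ≠ 0 := by rintro rfl; simp at hpq; exact hκ0 (by simpa using hpq)
  have hq' : aeval z q ≠ 0 := by rwa [Ne, map_eq_zero_iff _ injz]
  have hq'' : aeval z (q.map σ) ≠ 0 := by
    rwa [Ne, map_eq_zero_iff _ injz, Polynomial.map_eq_zero]
  refine four_roots_parity σ h₁ h₃ h₁₂ h₁₃ h₁₄ h₂₃ h₃₄ hc N p q hp hq (injz ?_)
  simp only [map_mul, map_pow, map_sub, aeval_X, aeval_C]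
  rw [hκ', hpq, map_div₀, hτaeval, hτaeval]
  field_simp

/-! ### Châtelet surfaces -/

/-- The extension `L = k(√μ)`, its conjugation `σ` and the square root `θ` of `μ`. -/
lemma exists_quadratic_extension {k : Type u} [Field k] [CharZero k] {μ : k} (hμ : ¬ IsSquare μ) :
    ∃ (L : Type u) (_ : Field L) (_ : Algebra k L) (σ : L ≃ₐ[k] L) (θ : L),
      θ ^ 2 = algebraMap k L μ ∧ σ θ = -θ ∧ (∀ a, σ (σ a) = a) ∧
      (∀ a, σ a = a → a ∈ Set.range (algebraMap k L)) := by
  have : Fact (∀ r : k, r ^ 2 ≠ μ + 0 * r) :=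
    ⟨fun r hr => hμ ⟨r, by rw [← pow_two, hr, zero_mul, add_zero]⟩⟩
  refine ⟨QuadraticAlgebra k μ 0, inferInstance, inferInstance,
    AlgEquiv.ofRingEquiv (f := starRingAut) ?_, QuadraticAlgebra.omega, ?_, ?_, ?_, ?_⟩
  · intro r
    ext <;> simp
  · ext <;> simp [pow_two]
  · ext <;> simp
  · intro a
    simp
  · intro a ha
    refine ⟨a.re, ?_⟩
    have h1 := congrArg QuadraticAlgebra.im ha
    simp at h1
    ext
    · simp
    · simpa using (self_eq_neg.1 h1.symm).symm

open IntermediateField in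
/-- Two generators of a rational function field in two variables are algebraically independent, as
the transcendence degree is two. -/
lemma algebraicIndependent_of_adjoin_eq_top {L : Type*} [Field L] {z U : FractionRing (MvPolynomial (Fin 2) L)}
    (h : adjoin L {z, U} = ⊤) : AlgebraicIndependent L ![z, U] := by
  have hrange : Set.range ![z, U] = {z, U} := by
    simp [Set.pair_comm]
  have halg : Algebra.IsAlgebraic (Algebra.adjoin L (Set.range ![z, U]))
      (FractionRing (MvPolynomial (Fin 2) L)) := by
    rw [← isAlgebraic_adjoin_iff_top, hrange, h]
    exact ⟨fun a => isAlgebraic_algebraMap (⟨a, trivial⟩ : (⊤ : IntermediateField L _))⟩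
  have := IsLocalization.isAlgebraic (FractionRing (MvPolynomial (Fin 2) L))
    (nonZeroDivisors (MvPolynomial (Fin 2) L))
  have hb : IsTranscendenceBasis L (algebraMap (MvPolynomial (Fin 2) L)
      (FractionRing (MvPolynomial (Fin 2) L)) ∘ MvPolynomial.X) :=
    (IsTranscendenceBasis.mvPolynomial (Fin 2) L).algebraMap_comp
  refine (Algebra.IsAlgebraic.isTranscendenceBasis_of_lift_le_trdeg_of_finite L ![z, U] ?_).1
  rw [← hb.lift_cardinalMk_eq_trdeg]

open MvPolynomial in
/-- If `∏ (z - eᵢ)` is a norm for the rational function `z = n / d` in lowest terms, then so is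
`(z - e₁)(z - e₂)` up to a constant: the two pairs of factors `n - eᵢ d` have no common prime. -/
lemma pair_of_roots_normClass {k L : Type*} [Field k] [Field L] [Algebra k L] {σ : L ≃ₐ[k] L}
    (hσσ : ∀ a, σ (σ a) = a)
    (hfix : ∀ a, σ a = a → a ∈ Set.range (algebraMap k L)) {e₁ e₂ e₃ e₄ : k}
    (h₁₃ : e₁ ≠ e₃) (h₁₄ : e₁ ≠ e₄) (h₂₃ : e₂ ≠ e₃) (h₂₄ : e₂ ≠ e₄)
    {n d : MvPolynomial (Fin 2) k} (hnd : IsRelPrime n d)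
    (h0 : (n - C e₁ * d) * (n - C e₂ * d) * ((n - C e₃ * d) * (n - C e₄ * d)) ≠ 0)
    (h : NormClass σ ((n - C e₁ * d) * (n - C e₂ * d) * ((n - C e₃ * d) * (n - C e₄ * d)))) :
    NormClass σ ((n - C e₁ * d) * (n - C e₂ * d)) := by
  refine NormClass.of_coprime_mul hσσ hfix (right_ne_zero_of_mul h0) _ (left_ne_zero_of_mul h0)
    ?_ h
  have aux : ∀ (e e' : k), e ≠ e' → ∀ π : MvPolynomial (Fin 2) k, Prime π →
      π ∣ n - C e * d → π ∣ n - C e' * d → False := by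
    intro e e' hee π hπ h1 h2
    have h3 : π ∣ C (e' - e) * d := by
      have := dvd_sub h1 h2
      convert this using 1
      rw [C_sub]; ring
    have hu : IsUnit (C (e' - e) : MvPolynomial (Fin 2) k) :=
      (isUnit_iff_ne_zero.2 (sub_ne_zero.2 hee.symm)).map C
    have h4 : π ∣ d := hu.dvd_mul_left.1 h3
    have h5 : π ∣ n := by
      have := dvd_add h1 (h4.mul_left (C e))
      simpa using this
    exact hπ.not_isUnit (hnd h5 h4)
  intro π hπ hG hH
  rcases hπ.dvd_or_dvd hG with a | a <;> rcases hπ.dvd_or_dvd hH with b | b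
  · exact aux _ _ h₁₃ π hπ a b
  · exact aux _ _ h₁₄ π hπ a b
  · exact aux _ _ h₂₃ π hπ a b
  · exact aux _ _ h₂₄ π hπ a b

open MvPolynomial in
/-- The function field `k(z, a, b)` of the Châtelet surface `a² - μ b² = ∏ (z - eᵢ)` with four
distinct roots `eᵢ ∈ k` and `μ` not a square is not a rational function field in two variables:
rationality would make `(z - e₁)(z - e₂)` a norm up to a constant, against
`not_norm_of_four_roots`. -/
lemma chatelet_not_rational {k : Type u} [Field k] [CharZero k] {μ : k} (hμ : ¬ IsSquare μ)
    {F : Type*} [Field F] [Algebra k F] (φ : F ≃ₐ[k] FractionRing (MvPolynomial (Fin 2) k))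
    {e₁ e₂ e₃ e₄ : k} (h₁₂ : e₁ ≠ e₂) (h₁₃ : e₁ ≠ e₃) (h₁₄ : e₁ ≠ e₄) (h₂₃ : e₂ ≠ e₃)
    (h₂₄ : e₂ ≠ e₄) (h₃₄ : e₃ ≠ e₄) (z a b : F)
    (hrel : a ^ 2 - algebraMap k F μ * b ^ 2 =
      (z - algebraMap k F e₁) * (z - algebraMap k F e₂) *
      ((z - algebraMap k F e₃) * (z - algebraMap k F e₄)))
    (hgen : IntermediateField.adjoin k {z, a, b} = ⊤) : False := by
  obtain ⟨L, _, _, σ, θ, hθ, hσθ, hσσ, hfix⟩ := exists_quadratic_extension hμ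
  have inj : Function.Injective (map (algebraMap k L) : MvPolynomial (Fin 2) k →+* _) :=
    map_injective _ (algebraMap k L).injective
  have hθ0 : θ ≠ 0 := by
    rintro rfl
    have : μ = 0 := by
      rw [zero_pow two_ne_zero] at hθ
      exact (map_eq_zero _).1 hθ.symm
    exact hμ (this ▸ IsSquare.zero)
  let Ω := FractionRing (MvPolynomial (Fin 2) L)
  let j : FractionRing (MvPolynomial (Fin 2) k) →+* Ω := IsFractionRing.map inj
  have hj : ∀ p, j (algebraMap _ _ p) = algebraMap (MvPolynomial (Fin 2) L) Ω
      (map (algebraMap k L) p) := fun p => IsLocalization.map_eq _ p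
  let τ : Ω →+* Ω := (IsFractionRing.ringEquivOfRingEquiv (K := Ω) (L := Ω)
    (mapEquiv (Fin 2) (σ : L ≃+* L)) : Ω ≃+* Ω)
  have hτB : ∀ p, τ (algebraMap (MvPolynomial (Fin 2) L) Ω p) =
      algebraMap (MvPolynomial (Fin 2) L) Ω (map (σ : L →+* L) p) := fun p =>
    IsFractionRing.ringEquivOfRingEquiv_algebraMap _ p
  have hτj : ∀ x, τ (j x) = j x := by
    intro x
    obtain ⟨p, q, -, rfl⟩ := IsFractionRing.div_surjective (A := MvPolynomial (Fin 2) k) x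
    rw [map_div₀, map_div₀, hj, hj, hτB, hτB, mvPoly_conj_map, mvPoly_conj_map]
  have hσσB : ∀ p : MvPolynomial (Fin 2) L, map (σ : L →+* L) (map (σ : L →+* L) p) = p := by
    intro p
    rw [map_map]
    convert map_id p
    ext a
    simpa using hσσ a
  have hττ : ∀ x, τ (τ x) = x := by
    intro x
    obtain ⟨p, q, -, rfl⟩ := IsFractionRing.div_surjective (A := MvPolynomial (Fin 2) L) x
    rw [map_div₀, map_div₀, hτB, hτB, hτB, hτB, hσσB, hσσB]
  have hLΩ : ∀ c : L, algebraMap L Ω c = algebraMap (MvPolynomial (Fin 2) L) Ω (C c) := fun c =>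
    IsScalarTower.algebraMap_apply L (MvPolynomial (Fin 2) L) Ω c
  have hkR : ∀ c : k, algebraMap k (FractionRing (MvPolynomial (Fin 2) k)) c =
      algebraMap (MvPolynomial (Fin 2) k) _ (C c) := fun c =>
    IsScalarTower.algebraMap_apply k (MvPolynomial (Fin 2) k) _ c
  have hτL : ∀ c : L, τ (algebraMap L Ω c) = algebraMap L Ω (σ c) := by
    intro c
    rw [hLΩ, hτB, map_C, hLΩ]
    rfl
  have hjk : ∀ c : k, j (algebraMap k _ c) = algebraMap L Ω (algebraMap k L c) := by
    intro c
    rw [hkR, hj, map_C, hLΩ]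
  -- Over `L` the Châtelet equation reads `U * τ U = ∏ (Z - eᵢ)`, so `Ω = L(Z, U)`.
  set Z := j (φ z) with hZ
  set U := j (φ a) + algebraMap L Ω θ * j (φ b) with hU
  have hτU : τ U = j (φ a) - algebraMap L Ω θ * j (φ b) := by
    rw [hU, map_add, map_mul, hτj, hτj, hτL, hσθ, map_neg]; ring
  have hrelΩ := congrArg (fun x => j (φ x)) hrel
  simp only [map_mul, map_sub, map_pow, AlgEquiv.commutes, hjk] at hrelΩ
  have hUτU : U * τ U = (Z - algebraMap L Ω (algebraMap k L e₁)) *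
      (Z - algebraMap L Ω (algebraMap k L e₂)) * (Z - algebraMap L Ω (algebraMap k L e₃)) *
      (Z - algebraMap L Ω (algebraMap k L e₄)) := by
    rw [hτU, hU, mul_assoc _ (Z - _) (Z - _), ← hrelΩ, ← hθ, map_pow]
    ring
  have hgenΩ : IntermediateField.adjoin L {Z, U} = ⊤ := by
    set S := IntermediateField.adjoin L {Z, U}
    have hZS : Z ∈ S := IntermediateField.subset_adjoin _ _ (by simp)
    have hUS : U ∈ S := IntermediateField.subset_adjoin _ _ (by simp)
    have hLS : ∀ c : L, algebraMap L Ω c ∈ S := S.algebraMap_mem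
    have hτUS : τ U ∈ S := by
      by_cases hU0 : U = 0
      · rw [hU0, map_zero]; exact S.zero_mem
      · have : τ U = (U * τ U) / U := (mul_div_cancel_left₀ _ hU0).symm
        rw [this, hUτU]
        refine S.div_mem (S.mul_mem (S.mul_mem (S.mul_mem ?_ ?_) ?_) ?_) hUS <;>
          exact S.sub_mem hZS (hLS _)
    have h2 : (2 : L) ≠ 0 := by
      have := charZero_of_injective_algebraMap (algebraMap k L).injective
      exact two_ne_zero
    have h2Ω : (algebraMap L Ω 2) ≠ 0 := by simpa using h2
    have hθΩ : (algebraMap L Ω θ) ≠ 0 := by simpa using hθ0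
    have haS : j (φ a) ∈ S := by
      have : j (φ a) = (U + τ U) / algebraMap L Ω 2 := by
        rw [eq_div_iff h2Ω, hτU, hU, map_ofNat]; ring
      rw [this]
      exact S.div_mem (S.add_mem hUS hτUS) (hLS _)
    have hbS : j (φ b) ∈ S := by
      have : j (φ b) = (U - τ U) / (algebraMap L Ω 2 * algebraMap L Ω θ) := by
        rw [eq_div_iff (mul_ne_zero h2Ω hθΩ), hτU, hU, map_ofNat]; ring
      rw [this]
      exact S.div_mem (S.sub_mem hUS hτUS) (S.mul_mem (hLS _) (hLS _))
    have hFS : ∀ x : F, j (φ x) ∈ S := by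
      intro x
      have hx : x ∈ IntermediateField.adjoin k {z, a, b} := by rw [hgen]; trivial
      induction hx using IntermediateField.adjoin_induction with
      | mem x hx =>
        rcases hx with rfl | rfl | rfl
        · exact hZS
        · exact haS
        · exact hbS
      | algebraMap c => rw [AlgEquiv.commutes, hjk]; exact hLS _
      | add x y _ _ hx hy => rw [map_add, map_add]; exact S.add_mem hx hy
      | inv x _ hx => rw [map_inv₀, map_inv₀]; exact S.inv_mem hx
      | mul x y _ _ hx hy => rw [map_mul, map_mul]; exact S.mul_mem hx hy
    have hBS : ∀ p, algebraMap (MvPolynomial (Fin 2) L) Ω p ∈ S := by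
      intro p
      induction p using MvPolynomial.induction_on with
      | C c => rw [← hLΩ]; exact hLS c
      | add p q hp hq => rw [map_add]; exact S.add_mem hp hq
      | mul_X p i hp =>
        rw [map_mul]
        refine S.mul_mem hp ?_
        have := hFS (φ.symm (algebraMap (MvPolynomial (Fin 2) k) _ (X i)))
        rwa [AlgEquiv.apply_symm_apply, hj, map_X] at this
    rw [eq_top_iff]
    intro x _
    obtain ⟨p, q, -, rfl⟩ := IsFractionRing.div_surjective (A := MvPolynomial (Fin 2) L) x
    exact S.div_mem (hBS p) (hBS q)
  have hind := algebraicIndependent_of_adjoin_eq_top hgenΩ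
  -- `z` is written as a reduced fraction `n / δ`; clearing denominators in the relation shows that
  -- `∏ (n - eᵢ δ)` is a norm up to squares.
  obtain ⟨n, ⟨δ, hδ⟩, hnd, hz⟩ :=
    IsFractionRing.exists_reduced_fraction (MvPolynomial (Fin 2) k) (φ z)
  obtain ⟨a₁, a₂, ha₂, ha⟩ :=
    IsFractionRing.div_surjective (A := MvPolynomial (Fin 2) k) (φ a)
  obtain ⟨b₁, b₂, hb₂, hb⟩ :=
    IsFractionRing.div_surjective (A := MvPolynomial (Fin 2) k) (φ b)
  have hd0 : δ ≠ 0 := nonZeroDivisors.ne_zero hδ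
  have ha₂0 : a₂ ≠ 0 := nonZeroDivisors.ne_zero ha₂
  have hb₂0 : b₂ ≠ 0 := nonZeroDivisors.ne_zero hb₂
  rw [IsFractionRing.mk'_eq_div] at hz
  dsimp only at hz hnd
  have hinjR := IsFractionRing.injective (MvPolynomial (Fin 2) k)
    (FractionRing (MvPolynomial (Fin 2) k))
  have hψ : ∀ {p : MvPolynomial (Fin 2) k}, p ≠ 0 →
      algebraMap _ (FractionRing (MvPolynomial (Fin 2) k)) p ≠ 0 := fun hp =>
    (map_ne_zero_iff _ hinjR).2 hp
  have hkey : (n - C e₁ * δ) * (n - C e₂ * δ) * ((n - C e₃ * δ) * (n - C e₄ * δ)) *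
      (a₂ * b₂) ^ 2 = ((a₁ * b₂) ^ 2 - C μ * (b₁ * a₂) ^ 2) * δ ^ 4 := by
    apply hinjR
    have hrelR := congrArg φ hrel
    simp only [map_mul, map_sub, map_pow, AlgEquiv.commutes, hkR, ← hz, ← ha, ← hb] at hrelR
    have h1 := hψ hd0
    have h2 := hψ ha₂0
    have h3 := hψ hb₂0
    simp only [map_mul, map_sub, map_pow]
    field_simp at hrelR
    linear_combination -hrelR
  have hZe : ∀ e : k, Z - algebraMap L Ω (algebraMap k L e) =
      j (algebraMap _ _ (n - C e * δ)) / j (algebraMap _ _ δ) := by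
    intro e
    have h1 : j (algebraMap _ _ δ) ≠ 0 := (map_ne_zero _).2 (hψ hd0)
    rw [hZ, ← hz, map_div₀, eq_div_iff h1, sub_mul, div_mul_cancel₀ _ h1, map_sub, map_sub,
      map_mul, map_mul, ← hkR, hjk]
  have h0 : (n - C e₁ * δ) * (n - C e₂ * δ) * ((n - C e₃ * δ) * (n - C e₄ * δ)) ≠ 0 := by
    intro h
    have hU0 : U ≠ 0 := hind.ne_zero 1
    refine mul_ne_zero hU0 ((map_ne_zero τ).2 hU0) ?_
    rw [hUτU, hZe, hZe, hZe, hZe]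
    simp only [mul_eq_zero] at h
    rcases h with (h | h) | (h | h) <;> simp [h]
  have hN : NormClass σ ((n - C e₁ * δ) * (n - C e₂ * δ) *
      ((n - C e₃ * δ) * (n - C e₄ * δ))) := by
    refine ⟨1, a₂ * b₂, (map (algebraMap k L) (a₁ * b₂) +
      C θ * map (algebraMap k L) (b₁ * a₂)) * map (algebraMap k L) (δ ^ 2), one_ne_zero,
      mul_ne_zero ha₂0 hb₂0, ?_⟩
    rw [C_1, one_mul, hkey]
    simp only [map_mul, map_add, map_sub, map_pow, map_C, mvPoly_conj_map]
    rw [RingHom.coe_coe, hσθ, ← hθ]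
    simp only [map_neg, map_pow]
    ring
  obtain ⟨c, w, β, hc, hw, hβ⟩ := pair_of_roots_normClass hσσ hfix h₁₃ h₁₄ h₂₃ h₂₄ hnd h0 hN
  have hinjk := (algebraMap k L).injective
  refine not_norm_of_four_roots (σ : L →+* L) τ hττ hτL (hτj _) hind hgenΩ
    (σ.commutes e₁) (σ.commutes e₂) (σ.commutes e₃) (σ.commutes e₄) (hinjk.ne h₁₂)
    (hinjk.ne h₁₃) (hinjk.ne h₁₄) (hinjk.ne h₂₃) (hinjk.ne h₃₄) hUτU
    ((map_ne_zero (algebraMap k L)).2 hc)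
    (algebraMap _ Ω β / j (algebraMap _ _ (w * δ))) ?_
  have hβΩ := congrArg (algebraMap (MvPolynomial (Fin 2) L) Ω) hβ
  rw [← hj, map_mul _ β, ← hτB] at hβΩ
  rw [map_div₀, hτj, div_mul_div_comm, ← hβΩ, hZe, hZe]
  have h1 : j (algebraMap _ _ δ) ≠ 0 := (map_ne_zero _).2 (hψ hd0)
  have h2 : j (algebraMap _ _ w) ≠ 0 := (map_ne_zero _).2 (hψ hw)
  simp only [map_mul, map_pow, ← hkR, hjk]
  rw [div_mul_div_comm, mul_div_assoc', div_eq_div_iff (by simp [h1, h2]) (by simp [h1])]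
  ring

/-! ### From the quotient surface to a Châtelet surface -/

/-- Constants with `a, b = (u ∓ i v) / w`, `e = i u v`, `z = (w - v) / (u e)`. They give the
factorisation `A X⁴ + 2 B X² Y² + A Y⁴ = μ w² (X² + a² Y²)(X² + b² Y²)`, and the last parameter `l`
is a square root of `2 z (b² - 1)`, equal to `(1 + i)(u - i (w - v)) / (u w)`. -/
lemma exists_conic_parameters {k : Type*} [Field k] [CharZero k] {i u v w : k} (hi : i ^ 2 = -1)
    (hu : u ≠ 0) (hv : v ≠ 0) (hw : w ≠ 0) (huvw : w ^ 2 = u ^ 2 + v ^ 2) :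
    ∃ a b e z l : k, a * b = 1 ∧ b ^ 2 ≠ 1 ∧ b ^ 2 ≠ -1 ∧ e ≠ 0 ∧ l ≠ 0 ∧
      (b ^ 2 + 1) * (1 + e ^ 2 * z ^ 2) = 4 * e * z * b ∧ l ^ 2 = 2 * z * (b ^ 2 - 1) ∧
      e ^ 2 = -(u ^ 2 * v ^ 2) ∧ w ^ 2 * (a ^ 2 + b ^ 2) = 2 * (u ^ 2 - v ^ 2) := by
  have hi0 : i ≠ 0 := by
    rintro rfl
    norm_num at hi
  have hab : (u - i * v) / w * ((u + i * v) / w) = 1 := by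
    field_simp
    linear_combination -v ^ 2 * hi - huvw
  have hb0 : (u + i * v) / w ≠ 0 := right_ne_zero_of_mul_eq_one hab
  have h2 : (2 : k) ≠ 0 := two_ne_zero
  have hb1 : ((u + i * v) / w) ^ 2 - 1 = 2 * i * v * ((u + i * v) / w) / w := by
    rw [← hab]; field_simp; ring
  have hb2 : ((u + i * v) / w) ^ 2 + 1 = 2 * u * ((u + i * v) / w) / w := by
    rw [← hab]; field_simp; ring
  have hwv : w - v ≠ 0 := by
    intro h
    have : u ^ 2 = 0 := by linear_combination (w + v) * h - huvw
    exact hu (pow_eq_zero_iff two_ne_zero |>.1 this)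
  have huiv : u + i * v ≠ 0 := fun h => hb0 (by rw [h, zero_div])
  have hl : ((1 + i) * (u - i * (w - v)) / (u * w)) ^ 2 =
      2 * ((w - v) / (u * (i * u * v))) * (((u + i * v) / w) ^ 2 - 1) := by
    rw [hb1]
    field_simp
    have : (1 + i) ^ 2 = 2 * i := by linear_combination hi
    rw [this]
    have h3 : i * (u - i * (w - v)) ^ 2 = 2 * (w - v) * (u + i * v) := by
      linear_combination (i * (w - v) ^ 2 - 2 * u * (w - v)) * hi - i * huvw
    linear_combination 2 * h3
  refine ⟨(u - i * v) / w, (u + i * v) / w, i * u * v, (w - v) / (u * (i * u * v)),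
    (1 + i) * (u - i * (w - v)) / (u * w), hab, ?_, ?_, by simp [hi0, hu, hv], ?_, ?_, hl, ?_, ?_⟩
  · rw [← sub_ne_zero, hb1]
    simp [hi0, hv, hw, huiv]
  · intro h
    rw [← sub_eq_zero, sub_neg_eq_add, hb2] at h
    simp [hu, hw, huiv] at h
  · intro h
    rw [h, hb1] at hl
    symm at hl
    simp [hi0, hu, hv, hw, hwv, huiv] at hl
  · rw [hb2]
    field_simp
    linear_combination -2 * huvw
  · linear_combination u ^ 2 * v ^ 2 * hi
  · field_simp
    linear_combination 2 * v ^ 2 * hi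

/-- In terms of `m = s (p² + b²) / μ⁴` the quotient surface is a conic bundle over the `m`-line. -/
lemma conic_relation {F : Type*} [Field F] {a b e w μ p s τ : F} (hab : a * b = 1)
    (hμ : μ ≠ 0) (hw : w ≠ 0) (hp : p ^ 2 + b ^ 2 ≠ 0)
    (hrel : s * (w * μ ^ 3 * τ) ^ 2 =
      μ * w ^ 2 * (s ^ 2 * (p ^ 2 + a ^ 2) * (p ^ 2 + b ^ 2) - e ^ 2 * μ ^ 8))
    {m : F} (hm : μ ^ 4 * m = s * (p ^ 2 + b ^ 2)) :
    μ * m * τ ^ 2 = (m ^ 2 - e ^ 2) * p ^ 2 + a ^ 2 * (m ^ 2 - b ^ 4 * e ^ 2) := by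
  have hs : s = μ ^ 4 * m / (p ^ 2 + b ^ 2) := by field_simp; exact hm.symm
  have h1 : s * μ ^ 5 * τ ^ 2 = s ^ 2 * (p ^ 2 + a ^ 2) * (p ^ 2 + b ^ 2) - e ^ 2 * μ ^ 8 := by
    have : μ * w ^ 2 ≠ 0 := by simp [hμ, hw]
    apply mul_left_cancel₀ this
    linear_combination hrel
  have h2 : μ ^ 8 ≠ 0 := by simp [hμ]
  apply mul_left_cancel₀ h2
  have h3 : (μ ^ 4 * m) * μ ^ 5 * τ ^ 2 =
      (μ ^ 4 * m) ^ 2 * (p ^ 2 + a ^ 2) - e ^ 2 * μ ^ 8 * (p ^ 2 + b ^ 2) := by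
    rw [hm]; linear_combination (p ^ 2 + b ^ 2) * h1
  have h4 : a ^ 2 * b ^ 4 = b ^ 2 := by
    linear_combination b ^ 2 * (a * b + 1) * hab
  linear_combination h3 + μ ^ 8 * e ^ 2 * h4

/-- The point `(x, Y, Z)` transforms the conic bundle `μ m τ² = N₁ p² + a² N₂` into the surface
`X'² - μ Y'² = N₁ N₂`: the product of the two forms `N₁ p² - (i a)² N₂` and `N₁ Z² - N₂ Y²` equals
`(N₁ p Z - i a Y N₂)² - N₁ N₂ (i a Z - p Y)²`. -/
lemma chatelet_relation {F : Type*} [Field F] {i a μ τ p m N₁ N₂ Y Z x : F} (hi : i ^ 2 = -1)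
    (hconic : μ * m * τ ^ 2 = N₁ * p ^ 2 + a ^ 2 * N₂)
    (hpt : N₁ * Z ^ 2 - N₂ * Y ^ 2 = m * x ^ 2) (hD : i * a * Z - p * Y ≠ 0) :
    ((N₁ * p * Z - i * a * Y * N₂) / (i * a * Z - p * Y)) ^ 2 -
      μ * (τ * m * x / (i * a * Z - p * Y)) ^ 2 = N₁ * N₂ := by
  rw [div_pow, div_pow, ← mul_div_assoc, ← sub_div, div_eq_iff (pow_ne_zero 2 hD)]
  linear_combination (-m * x ^ 2) * hconic + (N₁ * p ^ 2 + a ^ 2 * N₂) * hpt +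
   (a ^ 2 * Y ^ 2 * N₂ ^ 2 - N₁ * N₂ * a ^ 2 * Z ^ 2) * hi

/-- A `k(m)`-point of the conic `N₁ Z² - N₂ Y² = m x²`, where `N₁ = m² - e²` and
`N₂ = m² - b⁴ e²`. After division by `m`, the left side is a quadratic in `m` whose discriminant
vanishes by `h`. -/
lemma conic_point {F : Type*} [Field F] {b e z l m : F}
    (h : (b ^ 2 + 1) * (1 + e ^ 2 * z ^ 2) = 4 * e * z * b) (hl : l ^ 2 = 2 * z * (b ^ 2 - 1)) :
    (m ^ 2 - e ^ 2) * (b ^ 2 + z * m) ^ 2 - (m ^ 2 - b ^ 4 * e ^ 2) * (1 + z * m) ^ 2 =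
      m * (l * (m + e * b)) ^ 2 := by
  linear_combination m ^ 2 * (b ^ 2 - 1) * h - m * (m + e * b) ^ 2 * hl

/-- The substitution of `chatelet_relation` is birational: `p` and `τ` are recovered rationally
from `X'`, `Y'` and elements of the base `G`. -/
lemma mem_adjoin_of_chatelet {k F : Type*} [Field k] [Field F] [Algebra k F]
    (G : IntermediateField k F) {i a τ p m N₁ N₂ Y Z x : F}
    (hi : i ∈ G) (ha : a ∈ G) (hm : m ∈ G) (hN₁ : N₁ ∈ G) (hN₂ : N₂ ∈ G) (hY : Y ∈ G)
    (hZ : Z ∈ G) (hx : x ∈ G) (hm0 : m ≠ 0) (hx0 : x ≠ 0) (hia : i * a ≠ 0)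
    (hpt : N₁ * Z ^ 2 - N₂ * Y ^ 2 = m * x ^ 2) (hD : i * a * Z - p * Y ≠ 0)
    (hX' : (N₁ * p * Z - i * a * Y * N₂) / (i * a * Z - p * Y) ∈ G)
    (hY' : τ * m * x / (i * a * Z - p * Y) ∈ G) : p ∈ G ∧ τ ∈ G := by
  obtain ⟨X', hX'd⟩ : ∃ X', X' = (N₁ * p * Z - i * a * Y * N₂) / (i * a * Z - p * Y) := ⟨_, rfl⟩
  obtain ⟨Y', hY'd⟩ : ∃ Y', Y' = τ * m * x / (i * a * Z - p * Y) := ⟨_, rfl⟩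
  rw [← hX'd] at hX'
  rw [← hY'd] at hY'
  rw [eq_div_iff hD] at hX'd hY'd
  have h1 : p * (N₁ * Z + Y * X') = i * a * (Z * X' + Y * N₂) := by
    linear_combination -hX'd
  have h2 : N₁ * Z + Y * X' ≠ 0 := by
    intro h
    rw [h, mul_zero, eq_comm, mul_eq_zero, or_iff_right hia] at h1
    have : m * x ^ 2 = 0 := by rw [← hpt]; linear_combination Z * h - Y * h1
    simp [hm0, hx0] at this
  have hp : p = i * a * (Z * X' + Y * N₂) / (N₁ * Z + Y * X') := by rw [eq_div_iff h2, h1]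
  have hpG : p ∈ G := by
    rw [hp]
    exact G.div_mem (G.mul_mem (G.mul_mem hi ha) (G.add_mem (G.mul_mem hZ hX') (G.mul_mem hY hN₂)))
      (G.add_mem (G.mul_mem hN₁ hZ) (G.mul_mem hY hX'))
  refine ⟨hpG, ?_⟩
  have hτ : τ = Y' * (i * a * Z - p * Y) / (m * x) := by
    rw [eq_div_iff (mul_ne_zero hm0 hx0), hY'd, mul_assoc]
  rw [hτ]
  exact G.div_mem (G.mul_mem hY' (G.sub_mem (G.mul_mem (G.mul_mem hi ha) hZ) (G.mul_mem hpG hY)))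
    (G.mul_mem hm hx)

/-- The quotient surface `s t² = μ w² (s² (p² + a²)(p² + b²) - e² μ⁸)` is not rational, being
birational to the Châtelet surface with roots `±e, ±b² e`. -/
lemma quotient_not_rational {k : Type u} [Field k] [CharZero k] {μ : k} (hμ : ¬ IsSquare μ)
    {F : Type*} [Field F] [Algebra k F] (φ : F ≃ₐ[k] FractionRing (MvPolynomial (Fin 2) k))
    {i a b e z l w : k} (hi : i ^ 2 = -1) (hw : w ≠ 0) (hab : a * b = 1) (hb1 : b ^ 2 ≠ 1)
    (hb2 : b ^ 2 ≠ -1) (he : e ≠ 0) (hl0 : l ≠ 0)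
    (hz : (b ^ 2 + 1) * (1 + e ^ 2 * z ^ 2) = 4 * e * z * b)
    (hl : l ^ 2 = 2 * z * (b ^ 2 - 1)) (p s t m : F)
    (hgen : IntermediateField.adjoin k {p, s, t} = ⊤)
    (hrel : s * t ^ 2 = algebraMap k F (w ^ 2 * μ) * (s ^ 2 * (p ^ 2 + algebraMap k F a ^ 2) *
      (p ^ 2 + algebraMap k F b ^ 2) - algebraMap k F (e ^ 2 * μ ^ 8)))
    (hm : algebraMap k F μ ^ 4 * m = s * (p ^ 2 + algebraMap k F b ^ 2))
    (hm0 : m ≠ 0) (hx0 : m + algebraMap k F (e * b) ≠ 0)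
    (hD0 : algebraMap k F (i * a) * (algebraMap k F b ^ 2 + algebraMap k F z * m) -
      p * (1 + algebraMap k F z * m) ≠ 0) : False := by
  let ι := algebraMap k F
  have hμ0 : μ ≠ 0 := by rintro rfl; exact hμ IsSquare.zero
  have hb0 : b ≠ 0 := right_ne_zero_of_mul_eq_one hab
  have ha0 : a ≠ 0 := left_ne_zero_of_mul_eq_one hab
  have hi0 : i ≠ 0 := by rintro rfl; norm_num at hi
  have h2 : (2 : k) ≠ 0 := two_ne_zero
  have ι0 : ∀ {c : k}, c ≠ 0 → ι c ≠ 0 := fun hc => (map_ne_zero ι).2 hc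
  have hiF : ι i ^ 2 = -1 := by rw [← map_pow, hi, map_neg, map_one]
  have habF : ι a * ι b = 1 := by rw [← map_mul, hab, map_one]
  have hpb : p ^ 2 + ι b ^ 2 ≠ 0 := by
    intro h
    rw [h, mul_zero] at hm
    exact mul_ne_zero (pow_ne_zero 4 (ι0 hμ0)) hm0 hm
  have hτ : ι w * ι μ ^ 3 * (t / (ι w * ι μ ^ 3)) = t :=
    mul_div_cancel₀ _ (mul_ne_zero (ι0 hw) (pow_ne_zero 3 (ι0 hμ0)))
  set τ := t / (ι w * ι μ ^ 3) with hτd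
  have hconic := conic_relation (a := ι a) (b := ι b) (e := ι e) (w := ι w) (μ := ι μ) (p := p)
    (s := s) (τ := τ) habF (ι0 hμ0) (ι0 hw) hpb (by
      rw [hτ, hrel]; simp only [map_mul, map_pow]; ring) hm
  have hpt := conic_point (b := ι b) (e := ι e) (z := ι z) (l := ι l) (m := m)
    (by
      have h := congrArg ι hz
      simp only [map_mul, map_add, map_pow, map_one, map_ofNat] at h
      exact h)
    (by
      have h := congrArg ι hl
      simp only [map_mul, map_sub, map_pow, map_one, map_ofNat] at h
      exact h)
  have hD : ι i * ι a * (ι b ^ 2 + ι z * m) - p * (1 + ι z * m) ≠ 0 := by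
    rw [← map_mul]; exact hD0
  have hch := chatelet_relation hiF hconic hpt hD
  refine chatelet_not_rational hμ φ (e₁ := e) (e₂ := -e) (e₃ := b ^ 2 * e) (e₄ := -(b ^ 2 * e))
    ?_ ?_ ?_ ?_ ?_ ?_ m _ _ (hch.trans ?_) ?_
  · intro h
    exact mul_ne_zero h2 he (by linear_combination h)
  · intro h
    exact mul_ne_zero (sub_ne_zero.2 hb1) he (by linear_combination -h)
  · intro h
    exact mul_ne_zero (sub_ne_zero.2 hb2) he (by linear_combination h)
  · intro h
    exact mul_ne_zero (sub_ne_zero.2 hb2) he (by linear_combination -h)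
  · intro h
    exact mul_ne_zero (sub_ne_zero.2 hb1) he (by linear_combination h)
  · intro h
    exact mul_ne_zero (mul_ne_zero h2 (pow_ne_zero 2 hb0)) he (by linear_combination h)
  · simp only [map_neg, map_mul, map_pow]
    ring
  · set G := IntermediateField.adjoin k
      {m, ((m ^ 2 - ι e ^ 2) * p * (ι b ^ 2 + ι z * m) -
        ι i * ι a * (1 + ι z * m) * (m ^ 2 - ι b ^ 4 * ι e ^ 2)) /
        (ι i * ι a * (ι b ^ 2 + ι z * m) - p * (1 + ι z * m)),
        τ * m * (ι l * (m + ι e * ι b)) /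
        (ι i * ι a * (ι b ^ 2 + ι z * m) - p * (1 + ι z * m))} with hG
    have hc : ∀ c : k, ι c ∈ G := G.algebraMap_mem
    have hmG : m ∈ G := IntermediateField.subset_adjoin _ _ (by simp)
    have hYG : 1 + ι z * m ∈ G := G.add_mem G.one_mem (G.mul_mem (hc _) hmG)
    have hZG : ι b ^ 2 + ι z * m ∈ G := G.add_mem (pow_mem (hc _) 2) (G.mul_mem (hc _) hmG)
    have hN₁ : m ^ 2 - ι e ^ 2 ∈ G := G.sub_mem (pow_mem hmG 2) (pow_mem (hc _) 2)
    have hN₂ : m ^ 2 - ι b ^ 4 * ι e ^ 2 ∈ G :=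
      G.sub_mem (pow_mem hmG 2) (G.mul_mem (pow_mem (hc _) 4) (pow_mem (hc _) 2))
    have hxG : ι l * (m + ι e * ι b) ∈ G :=
      G.mul_mem (hc _) (G.add_mem hmG (G.mul_mem (hc _) (hc _)))
    obtain ⟨hpG, hτG⟩ := mem_adjoin_of_chatelet G (τ := τ) (hc i) (hc a) hmG hN₁ hN₂ hYG hZG hxG hm0
      (mul_ne_zero (ι0 hl0) (by rw [← map_mul]; exact hx0)) (mul_ne_zero (ι0 hi0) (ι0 ha0))
      hpt hD (IntermediateField.subset_adjoin _ _ (by simp))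
      (IntermediateField.subset_adjoin _ _ (by simp))
    have htG : t ∈ G := by
      rw [← hτ]
      exact G.mul_mem (G.mul_mem (hc _) (pow_mem (hc _) 3)) hτG
    have hsG : s ∈ G := by
      rw [← div_eq_iff hpb |>.2 hm]
      exact G.div_mem (G.mul_mem (pow_mem (hc _) 4) hmG)
        (G.add_mem (pow_mem hpG 2) (pow_mem (hc _) 2))
    rw [eq_top_iff, ← hgen, IntermediateField.adjoin_le_iff]
    rintro _ (rfl | rfl | rfl)
    · exact hpG
    · exact hsG
    · exact htG

/-! ### The fixed field -/

lemma mem_fixedField_closure_singleton {k K : Type*} [Field k] [Field K] [Algebra k K]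
    {κ : K ≃ₐ[k] K} {g : K} :
    g ∈ IntermediateField.fixedField (Subgroup.closure {κ}) ↔ κ g = g := by
  rw [IntermediateField.mem_fixedField_iff]
  refine ⟨fun h => h κ (Subgroup.subset_closure rfl), fun h f hf => ?_⟩
  have : Subgroup.closure {κ} ≤ MulAction.stabilizer (K ≃ₐ[k] K) g := by
    rw [Subgroup.closure_le, Set.singleton_subset_iff]
    exact h
  exact this hf

/-- If `G` contains `x / y`, `y²` and `t / y`, then `k(x, y, t) = G + G y`. -/
lemma exists_eq_add_mul {k K : Type*} [Field k] [CharZero k] [Field K] [Algebra k K]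
    {x y t : K} (hy : y ≠ 0) (hgen : IntermediateField.adjoin k {x, y, t} = ⊤)
    {G : IntermediateField k K} (hp : x / y ∈ G) (hs : y ^ 2 ∈ G) (ht : t / y ∈ G) (g : K) :
    ∃ α ∈ G, ∃ β ∈ G, g = α + β * y := by
  have hg : g ∈ IntermediateField.adjoin k {x, y, t} := by rw [hgen]; trivial
  induction hg using IntermediateField.adjoin_induction with
  | mem g hg =>
    rcases hg with rfl | rfl | rfl
    · exact ⟨0, G.zero_mem, _, hp, by field_simp; simp⟩
    · exact ⟨0, G.zero_mem, 1, G.one_mem, by simp⟩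
    · exact ⟨0, G.zero_mem, _, ht, by field_simp; simp⟩
  | algebraMap c => exact ⟨_, G.algebraMap_mem c, 0, G.zero_mem, by simp⟩
  | add g h _ _ hg hh =>
    obtain ⟨α, hα, β, hβ, rfl⟩ := hg
    obtain ⟨γ, hγ, δ, hδ, rfl⟩ := hh
    exact ⟨_, G.add_mem hα hγ, _, G.add_mem hβ hδ, by ring⟩
  | mul g h _ _ hg hh =>
    obtain ⟨α, hα, β, hβ, rfl⟩ := hg
    obtain ⟨γ, hγ, δ, hδ, rfl⟩ := hh
    exact ⟨α * γ + β * δ * y ^ 2, G.add_mem (G.mul_mem hα hγ) (G.mul_mem (G.mul_mem hβ hδ) hs),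
      α * δ + β * γ, G.add_mem (G.mul_mem hα hδ) (G.mul_mem hβ hγ), by ring⟩
  | inv g _ hg =>
    obtain ⟨α, hα, β, hβ, rfl⟩ := hg
    by_cases h : α - β * y = 0
    · refine ⟨(α + α)⁻¹, G.inv_mem (G.add_mem hα hα), 0, G.zero_mem, ?_⟩
      rw [zero_mul, add_zero, ← sub_eq_zero.1 h]
    by_cases h' : α + β * y = 0
    · exact ⟨0, G.zero_mem, 0, G.zero_mem, by simp [h']⟩
    have hn : α ^ 2 - β ^ 2 * y ^ 2 ∈ G :=
      G.sub_mem (pow_mem hα 2) (G.mul_mem (pow_mem hβ 2) hs)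
    have hn0 : α ^ 2 - β ^ 2 * y ^ 2 ≠ 0 := by
      have := mul_ne_zero h h'
      intro h0
      exact this (by linear_combination h0)
    refine ⟨_, G.div_mem hα hn, _, G.div_mem (G.neg_mem hβ) hn, ?_⟩
    rw [inv_eq_iff_eq_inv, eq_comm, ← mul_eq_one_iff_inv_eq₀ (by
      rw [div_mul_eq_mul_div, ← add_div]
      exact div_ne_zero (by intro h0; exact h (by linear_combination h0)) hn0)]
    field_simp
    ring

lemma fixedField_eq_adjoin {k K : Type*} [Field k] [CharZero k] [Field K] [Algebra k K]
    {x y t : K} (hy : y ≠ 0) (hgen : IntermediateField.adjoin k {x, y, t} = ⊤)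
    {κ : K ≃ₐ[k] K} (hκx : κ x = -x) (hκy : κ y = -y) (hκt : κ t = -t) :
    IntermediateField.fixedField (Subgroup.closure {κ}) =
      IntermediateField.adjoin k {x / y, y ^ 2, t / y} := by
  have := charZero_of_injective_algebraMap (algebraMap k K).injective
  have hle : IntermediateField.adjoin k {x / y, y ^ 2, t / y} ≤
      IntermediateField.fixedField (Subgroup.closure {κ}) := by
    rw [IntermediateField.adjoin_le_iff]
    rintro _ (rfl | rfl | rfl) <;> rw [SetLike.mem_coe, mem_fixedField_closure_singleton]
    · rw [map_div₀, hκx, hκy, neg_div_neg_eq]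
    · rw [map_pow, hκy, neg_sq]
    · rw [map_div₀, hκt, hκy, neg_div_neg_eq]
  refine le_antisymm (fun g hg => ?_) hle
  obtain ⟨α, hα, β, hβ, rfl⟩ := exists_eq_add_mul hy hgen
    (G := IntermediateField.adjoin k {x / y, y ^ 2, t / y})
    (IntermediateField.subset_adjoin _ _ (by simp))
    (IntermediateField.subset_adjoin _ _ (by simp))
    (IntermediateField.subset_adjoin _ _ (by simp)) g
  rw [mem_fixedField_closure_singleton, map_add, map_mul, hκy,
    mem_fixedField_closure_singleton.1 (hle hα), mem_fixedField_closure_singleton.1 (hle hβ)] at hg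
  have h0 : 2 * (β * y) = 0 := by linear_combination -hg
  rw [mul_eq_zero, or_iff_right two_ne_zero] at h0
  rwa [h0, add_zero]

open MvPolynomial in
lemma aeval_ne_zero_of_eval_ne_zero {k K : Type*} [Field k] [Field K] [Algebra k K] {x y : K}
    (hind : AlgebraicIndependent k ![x, y]) {Q : MvPolynomial (Fin 2) k} (c d : k)
    (h : eval ![c, d] Q ≠ 0) : aeval ![x, y] Q ≠ 0 := by
  intro h0
  rw [(map_eq_zero_iff _ hind).1 h0, map_zero] at h
  exact h rfl

/-- The denominators occurring in the change of coordinates, up to the powers of `μ` and `y` that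
clear their own denominators, are nonzero polynomials in the independent elements `x` and `y`. -/
lemma coordinates_nonvanishing {k K : Type*} [Field k] [CharZero k] [Field K] [Algebra k K]
    {x y : K} (hind : AlgebraicIndependent k ![x, y]) {b c q n z : k} (hc : c ≠ 0) (hn : n ≠ 0) :
    x ^ 2 + algebraMap k K b ^ 2 * y ^ 2 ≠ 0 ∧
    x ^ 2 + algebraMap k K b ^ 2 * y ^ 2 + algebraMap k K c ≠ 0 ∧
    algebraMap k K q * (algebraMap k K (b ^ 2 * n) +
        algebraMap k K z * (x ^ 2 + algebraMap k K b ^ 2 * y ^ 2)) * y -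
      x * (algebraMap k K n +
        algebraMap k K z * (x ^ 2 + algebraMap k K b ^ 2 * y ^ 2)) ≠ 0 := by
  refine ⟨?_, ?_, ?_⟩
  · have := aeval_ne_zero_of_eval_ne_zero hind
      (Q := .X 0 ^ 2 + .C b ^ 2 * .X 1 ^ 2) 1 0 (by simp)
    simpa using this
  · have := aeval_ne_zero_of_eval_ne_zero hind
      (Q := .X 0 ^ 2 + .C b ^ 2 * .X 1 ^ 2 + .C c) 0 0 (by simpa using hc)
    simpa using this
  · have key := fun r hr => aeval_ne_zero_of_eval_ne_zero hind
      (Q := .C q * (.C (b ^ 2 * n) + .C z * (.X 0 ^ 2 + .C b ^ 2 * .X 1 ^ 2)) * .X 1 -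
        .X 0 * (.C n + .C z * (.X 0 ^ 2 + .C b ^ 2 * .X 1 ^ 2))) r 0 hr
    by_cases h : n + z = 0
    · have := key 2 (by
        have h3 : 2 * (n + z * 2 ^ 2) = -6 * n := by linear_combination 8 * h
        simp [h3, hn])
      simpa using this
    · have := key 1 (by
        intro h0
        apply h
        simp at h0
        linear_combination -h0)
      simpa using this

/-- With `C = u²v²w²μ⁹` and `κ` the involution `κ(x) = −x, κ(y) = −y, κ(t) = −t` (an
involution of type 2 in Table 2), the fixed field of `⟨κ⟩` acting on `K_C` is not
`k`-rational. -/
theorem delPezzo2_quartic_quotient_type2_not_rational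
    (k : Type*) [Field k] [CharZero k]
    (i : k) (hi : i ^ 2 = -1)
    (μ : k) (hμ : ¬ IsSquare μ)
    (u v w : k) (hu : u ≠ 0) (hv : v ≠ 0) (hw : w ≠ 0)
    (huvw : w ^ 2 = u ^ 2 + v ^ 2)
    (A B C : k)
    (hA : A = w ^ 2 * μ) (hB : B = (u ^ 2 - v ^ 2) * μ)
    (hC : C = u ^ 2 * v ^ 2 * w ^ 2 * μ ^ 9)
    -- K is the function field of the surface: K = k(x, y, t) with t² = f_C(x, y)
    (K : Type*) [Field K] [Algebra k K]
    (x y t : K)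
    (hind : AlgebraicIndependent k ![x, y])
    (hrel : t ^ 2 = algebraMap k K A * x ^ 4 + 2 * algebraMap k K B * x ^ 2 * y ^ 2
        + algebraMap k K A * y ^ 4 + algebraMap k K C)
    (hgen : IntermediateField.adjoin k {x, y, t} = ⊤)
    (ht : t ∉ IntermediateField.adjoin k ({x, y} : Set K))
    -- κ is the k-automorphism of order 2 with κ(x) = −x, κ(y) = −y, κ(t) = −t
    (κ : K ≃ₐ[k] K)
    (hκx : κ x = -x) (hκy : κ y = -y) (hκt : κ t = -t) :
    ¬ IsKRational k (IntermediateField.fixedField (Subgroup.closure {κ})) := by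
  rintro ⟨φ⟩
  obtain ⟨a, b, e, z, l, hab, hb1, hb2, he, hl0, hz, hl, heuv, hwab⟩ :=
    exists_conic_parameters hi hu hv hw huvw
  have hμ0 : μ ≠ 0 := by rintro rfl; exact hμ IsSquare.zero
  have hb0 : b ≠ 0 := right_ne_zero_of_mul_eq_one hab
  have hy : y ≠ 0 := hind.ne_zero 1
  have hfix := fixedField_eq_adjoin hy hgen hκx hκy hκt
  set F := IntermediateField.fixedField (Subgroup.closure {κ}) with hF
  have hpF : x / y ∈ F := by rw [hfix]; exact IntermediateField.subset_adjoin _ _ (by simp)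
  have hsF : y ^ 2 ∈ F := by rw [hfix]; exact IntermediateField.subset_adjoin _ _ (by simp)
  have htF : t / y ∈ F := by rw [hfix]; exact IntermediateField.subset_adjoin _ _ (by simp)
  have hμK : algebraMap k K μ ≠ 0 := (map_ne_zero _).2 hμ0
  obtain ⟨h1, h2, h3⟩ := coordinates_nonvanishing hind (b := b) (c := μ ^ 4 * (e * b))
    (q := i * a) (n := μ ^ 4) (z := z) (by simp [hμ0, he, hb0]) (by simp [hμ0])
  let p : F := ⟨x / y, hpF⟩
  let s : F := ⟨y ^ 2, hsF⟩
  let τ : F := ⟨t / y, htF⟩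
  let m : F := s * (p ^ 2 + algebraMap k F b ^ 2) / algebraMap k F μ ^ 4
  have hμF : algebraMap k F μ ≠ 0 := (map_ne_zero _).2 hμ0
  have hm : algebraMap k F μ ^ 4 * m = s * (p ^ 2 + algebraMap k F b ^ 2) :=
    mul_div_cancel₀ _ (pow_ne_zero 4 hμF)
  have hco : ∀ c : k, ((algebraMap k F c : F) : K) = algebraMap k K c := fun c => rfl
  have hmK : algebraMap k K μ ^ 4 * (m : K) = x ^ 2 + algebraMap k K b ^ 2 * y ^ 2 := by
    have := congrArg (fun f : F => (f : K)) hm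
    simp only [IntermediateField.coe_mul, IntermediateField.coe_pow, IntermediateField.coe_add,
      hco] at this
    rw [this]
    simp only [p, s]
    field_simp
  refine quotient_not_rational hμ φ hi hw hab hb1 hb2 he hl0 hz hl p s τ m ?_ ?_ hm ?_ ?_ ?_
  · have hmap : (IntermediateField.adjoin k {p, s, τ}).map F.val = F := by
      rw [IntermediateField.adjoin_map, Set.image_insert_eq, Set.image_pair]
      exact hfix.symm
    rw [eq_top_iff]
    intro g _
    have hg : (g : K) ∈ (IntermediateField.adjoin k {p, s, τ}).map F.val := by
      rw [hmap]; exact g.2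
    obtain ⟨g', hg', hgg⟩ := hg
    rwa [← Subtype.ext hgg]
  · apply Subtype.ext
    have hAB : algebraMap k K A * x ^ 4 + 2 * algebraMap k K B * x ^ 2 * y ^ 2
        + algebraMap k K A * y ^ 4 + algebraMap k K C = algebraMap k K (w ^ 2 * μ) *
        ((x ^ 2 + algebraMap k K a ^ 2 * y ^ 2) * (x ^ 2 + algebraMap k K b ^ 2 * y ^ 2) -
          algebraMap k K (e ^ 2 * μ ^ 8)) := by
      have e1 := congrArg (algebraMap k K) hwab
      have e2 := congrArg (algebraMap k K) hab
      have e3 := congrArg (algebraMap k K) heuv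
      rw [hA, hB, hC]
      simp only [map_mul, map_add, map_sub, map_neg, map_pow, map_one, map_ofNat] at e1 e2 e3 ⊢
      set ι := algebraMap k K
      linear_combination (-(ι μ * x ^ 2 * y ^ 2)) * e1 -
        (ι w ^ 2 * ι μ * y ^ 4 * (ι a * ι b + 1)) * e2 + ι w ^ 2 * ι μ ^ 9 * e3
    rw [hAB] at hrel
    simp only [map_mul, map_pow] at hrel
    simp only [IntermediateField.coe_mul, IntermediateField.coe_pow, IntermediateField.coe_add,
      AddSubgroupClass.coe_sub, hco, p, s, τ, map_mul, map_pow]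
    field_simp
    linear_combination hrel
  · intro h0
    rw [h0, IntermediateField.coe_zero, mul_zero] at hmK
    exact h1 hmK.symm
  · intro h0
    apply h2
    have := congrArg (fun f : F => (f : K)) h0
    simp only [IntermediateField.coe_add, IntermediateField.coe_zero, hco] at this
    rw [← hmK, map_mul _ (μ ^ 4), map_pow, ← mul_add, this, mul_zero]
  · intro h0
    apply h3
    have := congrArg (fun f : F => (f : K)) h0
    simp only [IntermediateField.coe_mul, IntermediateField.coe_pow, IntermediateField.coe_add,
      AddSubgroupClass.coe_sub, IntermediateField.coe_one, IntermediateField.coe_zero, hco] at this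
    have hpK : (p : K) * y = x := div_mul_cancel₀ _ hy
    rw [← hmK]
    simp only [map_mul, map_pow] at this ⊢
    linear_combination algebraMap k K μ ^ 4 * y * this + (1 + algebraMap k K z * m) *
      algebraMap k K μ ^ 4 * hpK
end

section
/- Let k̄ be an algebraically closed field of characteristic zero, and let g₁, g₂ ∈ GL₂(k̄) be such that their images ḡ₁, ḡ₂ in PGL₂(k̄) are nontrivial and generate a finite subgroup H of PGL₂(k̄). Then: (a) Fix(ḡ₁) = Fix(ḡ₂) if and only if H is cyclic; (b) if Fix(ḡ₁) and Fix(ḡ₂) have a common element, then Fix(ḡ₁) = Fix(ḡ₂). -/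
/-!
The image in `PGL₂` of a non-scalar `g` has finite order only if `g` is not parabolic (a power of
a parabolic matrix is parabolic in characteristic zero, hence never scalar), so such a `g` has
nonzero discriminant and is diagonalizable with two independent eigenvectors
(`exists_eigenvectors`).

If a non-scalar `g` commutes with `h`, then `h` preserves every eigenline of `g`
(`projFix_subset_of_commute`); so commuting non-scalar matrices have the same fixed points. This
reduces (b) and one half of (a) to commutation in `GL₂`:
* if `H` is cyclic, then `g₁` and `g₂` are scalar multiples of powers of one matrix;
* if `g₁`, `g₂` share an eigenvector, their commutator has eigenvalue `1` and determinant `1`,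
  hence discriminant `0`; as its image in `H` has finite order it is scalar, and therefore `1`.

Conversely, if the fixed points agree, then in a basis of eigenvectors of `g₁` both matrices are
diagonal. Modulo scalars they lie in the image of the torus `t ↦ P diag(t, 1) P⁻¹`, which is an
injective image of `k̄ˣ`, and finite subgroups of `k̄ˣ` are cyclic.
-/


open scoped MatrixGroups

/-- The fixed-point set on `P¹(k̄)` of (the image in `PGL₂` of) an element
`g ∈ GL₂(k̄)`: the set of 1-dimensional subspaces `l ⊆ k̄²` with `g(l) = l`. -/
def projFix (kbar : Type*) [Field kbar] (g : Matrix.GeneralLinearGroup (Fin 2) kbar) :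
    Set (Submodule kbar (Fin 2 → kbar)) :=
  {l | Module.finrank kbar l = 1 ∧
    Submodule.map (Matrix.toLin' ((g : Matrix (Fin 2) (Fin 2) kbar))) l = l}

section Helpers

open Matrix

variable {K : Type*} [Field K]

/-- Two vectors of the plane with vanishing determinant are proportional. -/
lemma exists_smul_of_cross_eq_zero {v w : Fin 2 → K} (hv : v ≠ 0)
    (h : v 0 * w 1 - w 0 * v 1 = 0) : ∃ c : K, w = c • v := by
  by_cases h0 : v 0 = 0
  · have h1 : v 1 ≠ 0 := by
      intro h1
      exact hv (by ext i; fin_cases i <;> simp [h0, h1])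
    refine ⟨w 1 / v 1, ?_⟩
    have hw : w 0 = 0 := by
      rcases mul_eq_zero.mp (show w 0 * v 1 = 0 by linear_combination -h + w 1 * h0) with h | h
      · exact h
      · exact absurd h h1
    ext i
    fin_cases i
    · simp [h0, hw]
    · simp [h1]
  · refine ⟨w 0 / v 0, ?_⟩
    ext i
    fin_cases i
    · simp [h0]
    · simp only [Fin.mk_one, Pi.smul_apply, smul_eq_mul]
      field_simp
      linear_combination h

lemma mem_projFix_iff (g : GL (Fin 2) K) (l : Submodule K (Fin 2 → K)) :
    l ∈ projFix K g ↔
      ∃ v : Fin 2 → K, v ≠ 0 ∧ l = Submodule.span K {v} ∧ ∃ a : K, g.val *ᵥ v = a • v := by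
  constructor
  · rintro ⟨hl, hm⟩
    obtain ⟨v, hv, hs⟩ := finrank_eq_one_iff'.mp hl
    have hspan : l = Submodule.span K {(v : Fin 2 → K)} := by
      apply le_antisymm
      · intro w hw
        obtain ⟨c, hc⟩ := hs ⟨w, hw⟩
        exact Submodule.mem_span_singleton.mpr ⟨c, congrArg Subtype.val hc⟩
      · rw [Submodule.span_singleton_le_iff_mem]
        exact v.2
    have hgv : g.val *ᵥ (v : Fin 2 → K) ∈ l := by
      exact hm.le ⟨v, v.2, by simp⟩
    obtain ⟨a, ha⟩ := hs ⟨_, hgv⟩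
    exact ⟨v, by simpa using hv, hspan, a, (congrArg Subtype.val ha).symm⟩
  · rintro ⟨v, hv, rfl, a, ha⟩
    refine ⟨finrank_span_singleton hv, ?_⟩
    have ha0 : a ≠ 0 := by
      rintro rfl
      apply hv
      have h := congrArg (fun x => (g⁻¹).val *ᵥ x) ha
      simp only [mulVec_mulVec, ← Units.val_mul, inv_mul_cancel, Units.val_one, one_mulVec,
        zero_smul, mulVec_zero] at h
      exact h
    rw [Submodule.map_span, Set.image_singleton, Matrix.toLin'_apply, ha]
    exact Submodule.span_singleton_smul_eq (IsUnit.mk0 a ha0) v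

/-- A matrix acting by the same scalar on two independent vectors is scalar. -/
lemma mem_center_of_eigenvectors (g : GL (Fin 2) K) {v w : Fin 2 → K} {a : K}
    (hvw : v 0 * w 1 - w 0 * v 1 ≠ 0) (hv : g.val *ᵥ v = a • v) (hw : g.val *ᵥ w = a • w) :
    g ∈ Subgroup.center (GL (Fin 2) K) := by
  rw [Matrix.GeneralLinearGroup.mem_center_iff_val_mem_range_scalar]
  have v0 := congrFun hv 0
  have v1 := congrFun hv 1
  have w0 := congrFun hw 0
  have w1 := congrFun hw 1
  simp only [mulVec, dotProduct, Fin.sum_univ_two, Pi.smul_apply, smul_eq_mul] at v0 v1 w0 w1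
  refine ⟨a, ?_⟩
  ext i j
  apply mul_left_cancel₀ hvw
  fin_cases i <;> fin_cases j <;>
    simp only [Fin.zero_eta, Fin.mk_one, scalar_apply, diagonal_apply_eq, ne_eq, zero_ne_one,
      one_ne_zero, not_false_eq_true, diagonal_apply_ne, mul_zero]
  · linear_combination -w 1 * v0 + v 1 * w0
  · linear_combination w 0 * v0 - v 0 * w0
  · linear_combination -w 1 * v1 + v 1 * w1
  · linear_combination w 0 * v1 - v 0 * w1

/-- If `g v = a v`, then `h v` is again in the `a`-eigenspace of `g`; were it independent of `v`,
`g` would be scalar. -/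
lemma projFix_subset_of_commute {g h : GL (Fin 2) K}
    (hg : g ∉ Subgroup.center (GL (Fin 2) K)) (hgh : g * h = h * g) :
    projFix K g ⊆ projFix K h := by
  intro l hl
  rw [mem_projFix_iff] at hl ⊢
  obtain ⟨v, hv, rfl, a, ha⟩ := hl
  refine ⟨v, hv, rfl, ?_⟩
  apply exists_smul_of_cross_eq_zero hv
  by_contra hne
  refine hg (mem_center_of_eigenvectors g hne ha ?_)
  rw [mulVec_mulVec, ← Units.val_mul, hgh, Units.val_mul, ← mulVec_mulVec, ha, mulVec_smul]

/-- In characteristic zero, a non-scalar matrix of finite order modulo scalars is not parabolic. -/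
lemma discr_ne_zero_of_pow_mem_center [CharZero K] {g : GL (Fin 2) K}
    (hg : g ∉ Subgroup.center (GL (Fin 2) K)) {n : ℕ} (hn : n ≠ 0)
    (hgn : g ^ n ∈ Subgroup.center (GL (Fin 2) K)) : g.val.discr ≠ 0 := by
  intro hd
  rw [Matrix.GeneralLinearGroup.mem_center_iff_val_mem_range_scalar] at hg hgn
  exact (Matrix.GeneralLinearGroup.IsParabolic.pow (g := g) ⟨hg, hd⟩ hn).1 hgn

lemma exists_eigenvectors [IsAlgClosed K] [CharZero K] (g : GL (Fin 2) K)
    (hd : g.val.discr ≠ 0) :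
    ∃ (v w : Fin 2 → K) (a b : K), v 0 * w 1 - w 0 * v 1 ≠ 0 ∧
      g.val *ᵥ v = a • v ∧ g.val *ᵥ w = b • w := by
  obtain ⟨s, hs⟩ := IsAlgClosed.exists_pow_nat_eq g.val.discr (n := 2) (by norm_num)
  rw [discr_fin_two, trace_fin_two, det_fin_two] at hs hd
  have hs0 : s ≠ 0 := by
    rintro rfl
    exact hd (by rw [← hs]; simp)
  have key : ∀ r : K, r ^ 2 = s ^ 2 →
      ∃ v : Fin 2 → K, v ≠ 0 ∧ g.val *ᵥ v = ((g.val 0 0 + g.val 1 1 + r) / 2) • v := by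
    intro r hr
    set e := (g.val 0 0 + g.val 1 1 + r) / 2 with he
    have hdet : (g.val - Matrix.scalar (Fin 2) e).det = 0 := by
      rw [det_fin_two]
      simp only [Matrix.sub_apply, scalar_apply, diagonal_apply_eq, ne_eq, zero_ne_one, one_ne_zero,
        not_false_eq_true, diagonal_apply_ne, sub_zero]
      rw [he]
      linear_combination (1 / 4) * (hr + hs)
    obtain ⟨v, hv, h⟩ := exists_mulVec_eq_zero_iff.mpr hdet
    refine ⟨v, hv, ?_⟩
    rw [sub_mulVec, sub_eq_zero] at h
    rw [h]
    ext i
    simp [mulVec_diagonal]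
  obtain ⟨v, hv, hgv⟩ := key s rfl
  obtain ⟨w, hw, hgw⟩ := key (-s) (by ring)
  refine ⟨v, w, _, _, ?_, hgv, hgw⟩
  intro hc
  obtain ⟨c, rfl⟩ := exists_smul_of_cross_eq_zero hv hc
  rw [mulVec_smul, hgv, smul_comm, ← sub_eq_zero, ← sub_smul] at hgw
  rcases smul_eq_zero.mp hgw with h | h
  · exact hs0 (by linear_combination h)
  · exact hw h

/-- The commutator `k` of two matrices with a common eigenvector fixes that vector and has
determinant `1`, so its discriminant vanishes and it is trivial when of finite order in `PGL₂`. -/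
lemma commute_of_common_eigenvector [CharZero K] {g h : GL (Fin 2) K} {v : Fin 2 → K}
    (hv : v ≠ 0) {a b : K} (hg : g.val *ᵥ v = a • v) (hh : h.val *ᵥ v = b • v) {n : ℕ}
    (hn : n ≠ 0) (hk : (g * h * (h * g)⁻¹) ^ n ∈ Subgroup.center (GL (Fin 2) K)) : g * h = h * g := by
  rw [← mul_inv_eq_one]
  have hkm : g * h * (h * g)⁻¹ * (h * g) = g * h := inv_mul_cancel_right _ _
  have hdet : (g * h * (h * g)⁻¹).val.det = 1 := by
    have : Matrix.GeneralLinearGroup.det (g * h * (h * g)⁻¹) = 1 := by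
      rw [map_mul, map_inv, mul_inv_eq_one, map_mul, map_mul, mul_comm]
    exact congrArg Units.val this
  set k := g * h * (h * g)⁻¹ with hkdef
  have hfix : k.val *ᵥ v = v := by
    have e : (h * g).val *ᵥ v = (g * h).val *ᵥ v := by
      simp only [Units.val_mul, ← mulVec_mulVec, hg, hh, mulVec_smul]
      rw [smul_comm]
    have e2 : v = (h * g)⁻¹.val *ᵥ ((g * h).val *ᵥ v) := by
      rw [← e, mulVec_mulVec, ← Units.val_mul]; simp
    -- The scalar `a b` is nonzero since `h g` is invertible.
    have e3 : (g * h).val *ᵥ v = (b * a) • v := by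
      simp only [Units.val_mul, ← mulVec_mulVec, hg, hh, mulVec_smul, smul_smul]
    have hab : b * a ≠ 0 := by
      intro h0
      rw [e3, h0] at e2
      exact hv (by rw [e2]; simp)
    have e4 : k.val *ᵥ ((h * g).val *ᵥ v) = (g * h).val *ᵥ v := by
      rw [mulVec_mulVec, ← Units.val_mul, hkm]
    rw [e, e3, mulVec_smul] at e4
    exact smul_right_injective _ hab e4
  have hcen : k ∈ Subgroup.center (GL (Fin 2) K) := by
    by_contra hnc
    apply discr_ne_zero_of_pow_mem_center hnc hn hk
    have h1 : (k.val - 1).det = 0 :=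
      exists_mulVec_eq_zero_iff.mp ⟨v, hv, by rw [sub_mulVec, hfix, one_mulVec, sub_self]⟩
    have htr : k.val.trace = 2 := by
      rw [det_fin_two] at h1 hdet
      rw [trace_fin_two]
      simp at h1
      linear_combination hdet - h1
    rw [discr_fin_two, htr, hdet]
    norm_num
  rw [Matrix.GeneralLinearGroup.mem_center_iff_val_mem_range_scalar] at hcen
  obtain ⟨c, hc⟩ := hcen
  rw [← hc] at hfix
  have hc1 : (c - 1) • v = 0 := by
    rw [sub_smul, one_smul, sub_eq_zero]
    nth_rewrite 2 [← hfix]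
    ext i
    simp [mulVec_diagonal]
  have hc1 : c = 1 := sub_eq_zero.mp ((smul_eq_zero.mp hc1).resolve_right hv)
  apply Units.ext
  rw [← hc, hc1]
  simp

/-- The one-parameter torus `t ↦ diag(t, 1)`. -/
def diagTorus (K : Type*) [Field K] : Kˣ →* GL (Fin 2) K :=
  (Units.map (Matrix.diagonalRingHom (Fin 2) K : (Fin 2 → K) →* Matrix (Fin 2) (Fin 2) K)).comp
    ((MulEquiv.piUnits.symm : (Fin 2 → Kˣ) ≃* (Fin 2 → K)ˣ).toMonoidHom.comp
      (MonoidHom.mulSingle (fun _ : Fin 2 => Kˣ) 0))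

lemma diagTorus_val (t : Kˣ) : (diagTorus K t).val = Matrix.diagonal ![(t : K), 1] := by
  ext i j
  fin_cases i <;> fin_cases j <;> simp [diagTorus, MulEquiv.piUnits]

/-- The torus in `PGL₂` fixing the two points spanned by the columns of `P`. -/
def conjTorus (P : GL (Fin 2) K) : Kˣ →* GL (Fin 2) K ⧸ Subgroup.center (GL (Fin 2) K) :=
  (QuotientGroup.mk' (Subgroup.center (GL (Fin 2) K))).comp
    ((MulAut.conj P).toMonoidHom.comp (diagTorus K))

lemma conjTorus_injective (P : GL (Fin 2) K) : Function.Injective (conjTorus P) := by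
  rw [injective_iff_map_eq_one]
  intro t ht
  have h : P * diagTorus K t * P⁻¹ ∈ Subgroup.center (GL (Fin 2) K) :=
    (QuotientGroup.eq_one_iff _).mp ht
  have h' : diagTorus K t ∈ Subgroup.center (GL (Fin 2) K) := by
    have := (inferInstance : (Subgroup.center (GL (Fin 2) K)).Normal).conj_mem _ h P⁻¹
    simpa [mul_assoc] using this
  rw [Matrix.GeneralLinearGroup.mem_center_iff_val_mem_range_scalar, diagTorus_val] at h'
  obtain ⟨c, hc⟩ := h'
  have h0 := congrFun (congrFun hc 0) 0
  have h1 := congrFun (congrFun hc 1) 1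
  simp at h0 h1
  exact Units.ext (by rw [← h0, h1]; simp)

/-- A matrix diagonal in the basis formed by the columns of `P` lies, modulo scalars, in the
torus attached to `P`: divide by the second eigenvalue. -/
lemma mk_mem_range_conjTorus (g P : GL (Fin 2) K) {v w : Fin 2 → K}
    (hP : P.val = !![v 0, w 0; v 1, w 1]) {a b : K}
    (hv : g.val *ᵥ v = a • v) (hw : g.val *ᵥ w = b • w) :
    QuotientGroup.mk' (Subgroup.center (GL (Fin 2) K)) g ∈ (conjTorus P).range := by
  have v0 := congrFun hv 0
  have v1 := congrFun hv 1
  have w0 := congrFun hw 0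
  have w1 := congrFun hw 1
  simp only [mulVec, dotProduct, Fin.sum_univ_two, Pi.smul_apply, smul_eq_mul] at v0 v1 w0 w1
  have hgP : g.val * P.val = P.val * Matrix.diagonal ![a, b] := by
    rw [hP]
    ext i j
    fin_cases i <;> fin_cases j <;>
      simp [Matrix.mul_apply, Fin.sum_univ_two, v0, v1, w0, w1, mul_comm a, mul_comm b]
  have hdet : a * b ≠ 0 := by
    have h1 : (g.val * P.val).det ≠ 0 := by
      rw [← Units.val_mul]
      exact ((Matrix.isUnit_iff_isUnit_det _).mp (g * P).isUnit).ne_zero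
    rw [hgP, det_mul, det_diagonal] at h1
    simpa using right_ne_zero_of_mul h1
  have ha : a ≠ 0 := left_ne_zero_of_mul hdet
  have hb : b ≠ 0 := right_ne_zero_of_mul hdet
  refine ⟨Units.mk0 a ha / Units.mk0 b hb, ?_⟩
  change QuotientGroup.mk' (Subgroup.center (GL (Fin 2) K))
    (P * diagTorus K (Units.mk0 a ha / Units.mk0 b hb) * P⁻¹) = _
  rw [QuotientGroup.mk'_eq_mk']
  refine ⟨Matrix.GeneralLinearGroup.scalar (Fin 2) (Units.mk0 b hb), ?_, ?_⟩
  · rw [Matrix.GeneralLinearGroup.mem_center_iff_val_mem_range_scalar]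
    exact ⟨b, rfl⟩
  · have hz : Matrix.GeneralLinearGroup.scalar (Fin 2) (Units.mk0 b hb) ∈
        Subgroup.center (GL (Fin 2) K) := by
      rw [Matrix.GeneralLinearGroup.mem_center_iff_val_mem_range_scalar]
      exact ⟨b, rfl⟩
    rw [mul_assoc, Subgroup.mem_center_iff.mp hz, ← mul_assoc, mul_inv_eq_iff_eq_mul]
    apply Units.ext
    rw [Units.val_mul, Units.val_mul, Units.val_mul, hgP, diagTorus_val, mul_assoc]
    congr 1
    ext i j
    fin_cases i <;> fin_cases j <;>
      simp [Matrix.mul_apply, Matrix.GeneralLinearGroup.scalar, hb]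

/-- A finite subgroup of a torus in `PGL₂` is isomorphic to a finite subgroup of `Kˣ`. -/
lemma isCyclic_of_le_range_conjTorus (P : GL (Fin 2) K)
    (H : Subgroup (GL (Fin 2) K ⧸ Subgroup.center (GL (Fin 2) K))) [Finite H]
    (hH : H ≤ (conjTorus P).range) : IsCyclic H := by
  let f := (conjTorus P).subgroupComap H
  have hinj : Function.Injective f := fun x y hxy =>
    Subtype.ext (conjTorus_injective P (congrArg Subtype.val hxy))
  have : Finite (H.comap (conjTorus P)) := Finite.of_injective f hinj
  refine isCyclic_of_surjective f ?_
  rintro ⟨x, hx⟩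
  obtain ⟨t, rfl⟩ := hH hx
  exact ⟨⟨t, hx⟩, rfl⟩

end Helpers

/-- Let `k̄` be algebraically closed of characteristic zero, and let `g₁, g₂ ∈ GL₂(k̄)` have
nontrivial images `ḡ₁, ḡ₂` in `PGL₂(k̄)` generating a finite subgroup `H`.  Then
(a) `Fix(ḡ₁) = Fix(ḡ₂)` iff `H` is cyclic, and (b) if `Fix(ḡ₁)` and `Fix(ḡ₂)` have a common
element then `Fix(ḡ₁) = Fix(ḡ₂)`. -/
theorem fix_eq_iff_cyclic
    (kbar : Type*) [Field kbar] [IsAlgClosed kbar] [CharZero kbar]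
    (g₁ g₂ : Matrix.GeneralLinearGroup (Fin 2) kbar)
    (π : Matrix.GeneralLinearGroup (Fin 2) kbar →*
        Matrix.GeneralLinearGroup (Fin 2) kbar ⧸
          Subgroup.center (Matrix.GeneralLinearGroup (Fin 2) kbar))
    (hπ : π = QuotientGroup.mk' (Subgroup.center (Matrix.GeneralLinearGroup (Fin 2) kbar)))
    (h1 : π g₁ ≠ 1) (h2 : π g₂ ≠ 1)
    (H : Subgroup (Matrix.GeneralLinearGroup (Fin 2) kbar ⧸
        Subgroup.center (Matrix.GeneralLinearGroup (Fin 2) kbar)))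
    (hH : H = Subgroup.closure {π g₁, π g₂})
    (hfin : Finite H) :
    (projFix kbar g₁ = projFix kbar g₂ ↔ IsCyclic H) ∧
    ((projFix kbar g₁ ∩ projFix kbar g₂).Nonempty → projFix kbar g₁ = projFix kbar g₂) := by
  subst hπ hH
  have c1 : g₁ ∉ Subgroup.center (GL (Fin 2) kbar) :=
    fun h => h1 ((QuotientGroup.eq_one_iff g₁).mpr h)
  have c2 : g₂ ∉ Subgroup.center (GL (Fin 2) kbar) :=
    fun h => h2 ((QuotientGroup.eq_one_iff g₂).mpr h)
  set π := QuotientGroup.mk' (Subgroup.center (GL (Fin 2) kbar)) with hπ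
  set H := Subgroup.closure {π g₁, π g₂} with hH
  have m1 : π g₁ ∈ H := Subgroup.subset_closure (by simp)
  have m2 : π g₂ ∈ H := Subgroup.subset_closure (by simp)
  have hpow : ∀ g, π g ∈ H → g ^ Nat.card H ∈ Subgroup.center (GL (Fin 2) kbar) := by
    intro g hg
    rw [← QuotientGroup.eq_one_iff]
    have h : (⟨π g, hg⟩ : H) ^ Nat.card H = 1 := pow_card_eq_one'
    exact congrArg Subtype.val h
  have hn : Nat.card H ≠ 0 := Nat.card_pos.ne'
  have hcomm : g₁ * g₂ = g₂ * g₁ → projFix kbar g₁ = projFix kbar g₂ := fun h =>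
    (projFix_subset_of_commute c1 h).antisymm (projFix_subset_of_commute c2 h.symm)
  refine ⟨⟨fun hfix => ?_, fun hcyc => ?_⟩, ?_⟩
  · obtain ⟨v, w, a, b, hvw, hv, hw⟩ :=
      exists_eigenvectors g₁ (discr_ne_zero_of_pow_mem_center c1 hn (hpow g₁ m1))
    have hv0 : v ≠ 0 := by rintro rfl; simp at hvw
    have hw0 : w ≠ 0 := by rintro rfl; simp at hvw
    have key : ∀ u : Fin 2 → kbar, u ≠ 0 → (∃ a : kbar, g₁.val.mulVec u = a • u) →
        ∃ c : kbar, g₂.val.mulVec u = c • u := by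
      intro u hu hgu
      have hm : Submodule.span kbar {u} ∈ projFix kbar g₂ := by
        rw [← hfix, mem_projFix_iff]
        exact ⟨u, hu, rfl, hgu⟩
      have hmap : g₂.val.mulVec u ∈ Submodule.span kbar {u} := by
        rw [← hm.2]
        exact ⟨u, Submodule.mem_span_singleton_self u, by simp⟩
      obtain ⟨c, hc⟩ := Submodule.mem_span_singleton.mp hmap
      exact ⟨c, hc.symm⟩
    obtain ⟨c, hc⟩ := key v hv0 ⟨a, hv⟩
    obtain ⟨d, hd⟩ := key w hw0 ⟨b, hw⟩
    let P : GL (Fin 2) kbar := Matrix.GeneralLinearGroup.mkOfDetNeZero !![v 0, w 0; v 1, w 1]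
      (by rwa [Matrix.det_fin_two_of])
    apply isCyclic_of_le_range_conjTorus P
    rw [hH, Subgroup.closure_le]
    rintro x (rfl | rfl)
    · exact mk_mem_range_conjTorus g₁ P rfl hv hw
    · exact mk_mem_range_conjTorus g₂ P rfl hc hd
  · apply hcomm
    obtain ⟨h, hh⟩ := (Subgroup.isCyclic_iff_exists_zpowers_eq_top H).mp hcyc
    obtain ⟨k, rfl⟩ := QuotientGroup.mk'_surjective _ h
    -- Every lift of an element of `H` is a power of `k` times a central matrix.
    have lift : ∀ g, π g ∈ H → ∃ z ∈ Subgroup.center (GL (Fin 2) kbar), ∃ m : ℤ,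
        k ^ m * z = g := by
      intro g hg
      rw [← hh] at hg
      obtain ⟨m, hm⟩ := hg
      have hm' : π (k ^ m) = π g := by rw [map_zpow]; exact hm
      obtain ⟨z, hz, hzg⟩ := (QuotientGroup.mk'_eq_mk' _).mp hm'
      exact ⟨z, hz, m, hzg⟩
    obtain ⟨z, hz, m, rfl⟩ := lift g₁ m1
    obtain ⟨y, hy, n, rfl⟩ := lift g₂ m2
    have hz' : ∀ x, Commute x z := Subgroup.mem_center_iff.mp hz
    have hy' : ∀ x, Commute x y := Subgroup.mem_center_iff.mp hy
    have hk : Commute (k ^ m) (k ^ n) := Commute.zpow_zpow_self k m n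
    exact (hk.mul_right (hy' _)).mul_left (hz' _).symm
  · rintro ⟨l, hl1, hl2⟩
    apply hcomm
    obtain ⟨v, hv, rfl, a, ha⟩ := (mem_projFix_iff g₁ l).mp hl1
    have hmap : g₂.val.mulVec v ∈ Submodule.span kbar {v} := by
      rw [← hl2.2]
      exact ⟨v, Submodule.mem_span_singleton_self v, by simp⟩
    obtain ⟨c, hc⟩ := Submodule.mem_span_singleton.mp hmap
    refine commute_of_common_eigenvector hv ha hc.symm hn (hpow _ ?_)
    simp only [map_mul, map_inv]
    exact H.mul_mem (H.mul_mem m1 m2) (H.inv_mem (H.mul_mem m2 m1))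
end

section
/- The polynomial 9X⁴ + 8X + 4 is irreducible over the cyclotomic field ℚ(ζ₃); equivalently, the Galois group of its splitting field over ℚ(ζ₃) permutes its four roots transitively. -/
open Polynomial

/-!
Over a field of characteristic zero, put `p = X⁴ + (8/9) X + 4/9`. A factorization of `p` into
monic quadratics has the form `(X² + aX + b)(X² - aX + c)`, and eliminating `b, c` shows that
`v = 9a²/4` is a root of the resolvent cubic `v³ - 9v - 9`. So `p` is irreducible as soon as
neither `p` nor this cubic has a root (`irreducible_monic_quartic`).

Over `ℚ`, the cubic has no root by parity and `p` is everywhere positive, so the cubic and `p` are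
irreducible over `ℚ`, of degrees 3 and 4. Neither degree divides `[ℚ(ζ₃) : ℚ] = 2`, so neither
polynomial has a root in `ℚ(ζ₃)`, and the criterion applies again over `ℚ(ζ₃)`.
-/

/-- The monic quartic `X⁴ + (8/9) X + 4/9` is irreducible if it has no root and its resolvent
cubic, normalized to `v³ - 9v - 9`, has no root. -/
lemma irreducible_monic_quartic {F : Type*} [Field F] [CharZero F]
    (hroot : ∀ r : F, r ^ 4 + 8 / 9 * r + 4 / 9 ≠ 0)
    (hres : ∀ v : F, v ^ 3 - 9 * v - 9 ≠ 0) :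
    Irreducible (X ^ 4 + C (8 / 9) * X + C (4 / 9) : F[X]) := by
  have hmonic : (X ^ 4 + C (8 / 9) * X + C (4 / 9) : F[X]).Monic := by monicity!
  have hdeg : (X ^ 4 + C (8 / 9) * X + C (4 / 9) : F[X]).natDegree = 4 := by compute_degree!
  rw [hmonic.irreducible_iff_natDegree']
  refine ⟨fun h => by simp [h] at hdeg, ?_⟩
  intro f g hf hg hfg hmem
  rw [hdeg, Finset.mem_Ioc] at hmem
  have hsum : f.natDegree + g.natDegree = 4 := by
    rw [← hf.natDegree_mul hg, hfg, hdeg]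
  obtain h1 | h2 : g.natDegree = 1 ∨ g.natDegree = 2 := by omega
  · obtain ⟨r, hr⟩ := exists_root_of_degree_eq_one
      ((degree_eq_iff_natDegree_eq_of_pos one_pos).2 h1)
    apply hroot r
    have h := congrArg (eval r) hfg
    rw [eval_mul, hr.eq_zero, mul_zero] at h
    simpa using h.symm
  · have hf2 : f.natDegree = 2 := by omega
    have ef : f = X ^ 2 + C (f.coeff 1) * X + C (f.coeff 0) := by
      conv_lhs => rw [hf.as_sum, hf2]
      simp [Finset.sum_range_succ]
      ring
    have eg : g = X ^ 2 + C (g.coeff 1) * X + C (g.coeff 0) := by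
      conv_lhs => rw [hg.as_sum, h2]
      simp [Finset.sum_range_succ]
      ring
    generalize f.coeff 1 = a at ef
    generalize f.coeff 0 = b at ef
    generalize g.coeff 1 = d at eg
    generalize g.coeff 0 = c at eg
    have key : C (a + d) * X ^ 3 + C (b + c + a * d) * X ^ 2
        + C (a * c + b * d - 8 / 9) * X + C (b * c - 4 / 9) = (0 : F[X]) := by
      rw [ef, eg] at hfg
      simp only [C_add, C_mul, C_sub]
      linear_combination hfg
    have k3 : a + d = 0 := by
      simpa [-map_add, -map_sub, -map_mul, coeff_X, coeff_X_pow, coeff_C] using congrArg (coeff · 3) key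
    have k2 : b + c + a * d = 0 := by
      simpa [-map_add, -map_sub, -map_mul, coeff_X, coeff_X_pow, coeff_C] using congrArg (coeff · 2) key
    have k1 : a * c + b * d - 8 / 9 = 0 := by
      simpa [-map_add, -map_sub, -map_mul, coeff_X, coeff_X_pow, coeff_C] using congrArg (coeff · 1) key
    have k0 : b * c - 4 / 9 = 0 := by
      simpa [-map_add, -map_sub, -map_mul, coeff_X, coeff_X_pow, coeff_C] using congrArg (coeff · 0) key
    obtain rfl : d = -a := by linear_combination k3
    have hs : b + c = a ^ 2 := by linear_combination k2
    have hd : a * (c - b) = 8 / 9 := by linear_combination k1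
    have hp : b * c = 4 / 9 := by linear_combination k0
    apply hres (9 * a ^ 2 / 4)
    -- `a² ((b + c)² - 4bc) = (a (c - b))²` is the resolvent equation `a⁶ - (16/9) a² = 64/81`.
    have h6 : a ^ 2 * ((a ^ 2) ^ 2 - 4 * (4 / 9)) = (8 / 9) ^ 2 := by
      rw [← hp, ← hd]
      linear_combination -a ^ 2 * (a ^ 2 + b + c) * hs
    linear_combination 729 / 64 * h6

/-- Rational roots are integers, and `n³ - 9n - 9` is odd for every integer `n`. -/
lemma rat_cubic_ne_zero (v : ℚ) : v ^ 3 - 9 * v - 9 ≠ 0 := by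
  intro h
  have hm : (X ^ 3 - C 9 * X - C 9 : ℤ[X]).Monic := by monicity!
  obtain ⟨n, rfl⟩ := isInteger_of_is_root_of_monic (A := ℤ) (K := ℚ) hm (r := v)
    (by simpa [-eq_intCast] using h)
  have hn : n ^ 3 - 9 * n - 9 = 0 := by
    have : ((n : ℚ)) ^ 3 - 9 * n - 9 = 0 := by simpa using h
    exact_mod_cast this
  have h2 : ((n : ZMod 2)) ^ 3 - 9 * n - 9 = 0 := by
    exact_mod_cast congrArg (Int.cast : ℤ → ZMod 2) hn
  generalize (n : ZMod 2) = m at h2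
  revert m
  decide

lemma rat_irreducible_cubic : Irreducible (X ^ 3 - C 9 * X - C 9 : ℚ[X]) := by
  have hd : (X ^ 3 - C 9 * X - C 9 : ℚ[X]).natDegree = 3 := by compute_degree!
  rw [irreducible_iff_roots_eq_zero_of_degree_le_three (by omega) (by omega)]
  refine Multiset.eq_zero_of_forall_notMem fun v hv => rat_cubic_ne_zero v ?_
  simpa using (mem_roots'.1 hv).2

lemma rat_irreducible_quartic : Irreducible (X ^ 4 + C (8 / 9) * X + C (4 / 9) : ℚ[X]) := by
  refine irreducible_monic_quartic (fun r => ne_of_gt ?_) rat_cubic_ne_zero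
  -- The minimum is attained near `r = -3/5`.
  nlinarith [sq_nonneg (r ^ 2 - 9 / 25), sq_nonneg (r + 3 / 5)]

/-- A monic irreducible rational polynomial with a root in `ℚ(ζ₃)` has degree dividing 2. -/
lemma natDegree_dvd_two_of_root {p : ℚ[X]} (hp : Irreducible p) (hm : p.Monic)
    {r : CyclotomicField 3 ℚ} (hr : aeval r p = 0) : p.natDegree ∣ 2 := by
  -- Instance search picks `DivisionRing.toRatAlgebra` here and does not unify it with the
  -- algebra structure of `CyclotomicField`, so the instance is supplied by name.
  have : IsCyclotomicExtension {3} ℚ (CyclotomicField 3 ℚ) :=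
    CyclotomicField.isCyclotomicExtension 3 ℚ
  have := IsCyclotomicExtension.finiteDimensional {3} ℚ (CyclotomicField 3 ℚ)
  have hfin : Module.finrank ℚ (CyclotomicField 3 ℚ) = 2 := by
    rw [IsCyclotomicExtension.finrank (n := 3) (CyclotomicField 3 ℚ)
      (cyclotomic.irreducible_rat (by norm_num))]
    decide
  rw [minpoly.eq_of_irreducible_of_monic hp hr hm, ← hfin]
  exact minpoly.degree_dvd (Algebra.IsIntegral.isIntegral r)

/-- The polynomial `9X⁴ + 8X + 4` is irreducible over the cyclotomic field `ℚ(ζ₃)`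
(equivalently, the Galois group of its splitting field over `ℚ(ζ₃)` permutes its four roots
transitively). -/
theorem irreducible_9X4_8X_4_over_Q_zeta3 :
    Irreducible
      (9 * X ^ 4 + 8 * X + 4 : Polynomial (CyclotomicField 3 ℚ)) := by
  have h : Irreducible (X ^ 4 + C (8 / 9) * X + C (4 / 9) : (CyclotomicField 3 ℚ)[X]) := by
    refine irreducible_monic_quartic (fun r hr => ?_) (fun v hv => ?_)
    · have hd := natDegree_dvd_two_of_root rat_irreducible_quartic (by monicity!) (r := r)
        (by simpa using hr)
      rw [show (X ^ 4 + C (8 / 9) * X + C (4 / 9) : ℚ[X]).natDegree = 4 by compute_degree!] at hd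
      omega
    · have hd := natDegree_dvd_two_of_root rat_irreducible_cubic (by monicity!) (r := v)
        (by simpa using hv)
      rw [show (X ^ 3 - C 9 * X - C 9 : ℚ[X]).natDegree = 3 by compute_degree!] at hd
      omega
  have h9 : IsUnit (C 9 : (CyclotomicField 3 ℚ)[X]) := isUnit_C.2 (by simp)
  have e : (9 * X ^ 4 + 8 * X + 4 : (CyclotomicField 3 ℚ)[X])
      = C 9 * (X ^ 4 + C (8 / 9) * X + C (4 / 9)) := by
    rw [mul_add, mul_add, ← mul_assoc, ← C_mul, ← C_mul, mul_div_cancel₀ _ (by norm_num),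
      mul_div_cancel₀ _ (by norm_num)]
    rfl
  rw [e]
  exact (irreducible_isUnit_mul h9).2 h
end

section
/- Let L = ℚ(ζ₃) and let K = L[Y]/(Y² + 22). Then: (a) the polynomial Y² + 22 is irreducible over L, so K is a field containing a square root of −22; (b) the cubic polynomial X³ + 2X² − 2 has no root in K; (c) 2 is not a square in K. -/
open Polynomial

/-!
Both `L = ℚ(ζ₃) = ℚ(√-3)` and `K = L(√-22)` are obtained by adjoining a square root, and in such
an extension `F(√d)/F` an element `c` of `F` is a square only if `c` or `c * d` is a square in `F`
(`isSquare_or_isSquare_mul`): expand `(u + v√d)² = c` and observe `2uv = 0`.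

Over `L` this reduces squareness of a rational `q` to that of `q` or `-3q` in `ℚ`. Hence `-22` is
not a square in `L`, since neither `-22` nor `66` is a rational square, which is (a). If `2` were a
square in `K`, then `2` or `-44` would be one in `L`, so one of `2, -6, -44, 132` would be a
rational square, which is false; this is (c).

For (b), `X³ + 2X² - 2` is Eisenstein at `2`, so a root would have degree `3` over `ℚ`, but `3`
does not divide `[K : ℚ] = 4`.
-/

/-- The hypotheses say that `E = F(√d)` is a quadratic extension, with `s = √d`. Write
`c = (u + v s)²`; as `s ∉ F`, one of `u`, `v` vanishes, so `c` is `u²` or `d v²`. -/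
lemma isSquare_or_isSquare_mul {F E : Type*} [Field F] [CharZero F] [Field E] [Algebra F E]
    {d : F} {s : E} (hs : s ^ 2 = algebraMap F E d) (hd : ¬ IsSquare d)
    (hspan : ∀ x : E, ∃ u v : F, x = algebraMap F E u + algebraMap F E v * s)
    {c : F} (hc : IsSquare (algebraMap F E c)) : IsSquare c ∨ IsSquare (c * d) := by
  have hinj := FaithfulSMul.algebraMap_injective F E
  obtain ⟨x, hx⟩ := hc
  obtain ⟨u, v, rfl⟩ := hspan x
  have key : algebraMap F E (2 * u * v) * s = algebraMap F E (c - u ^ 2 - v ^ 2 * d) := by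
    simp only [map_mul, map_sub, map_pow, map_ofNat, hx, ← hs]
    ring
  by_cases h : 2 * u * v = 0
  · have h2 : c - u ^ 2 - v ^ 2 * d = 0 := by
      apply hinj
      rw [← key, h, map_zero, zero_mul]
    have h3 : u = 0 ∨ v = 0 := by simpa using h
    rcases h3 with rfl | rfl
    · exact Or.inr ⟨v * d, by linear_combination d * h2⟩
    · exact Or.inl ⟨u, by linear_combination h2⟩
  · -- Otherwise `s` lies in `F`, so `d` is a square there.
    refine absurd ⟨(c - u ^ 2 - v ^ 2 * d) / (2 * u * v), hinj ?_⟩ hd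
    have h' : algebraMap F E (2 * u * v) ≠ 0 := by simpa using h
    have hs' : s = algebraMap F E ((c - u ^ 2 - v ^ 2 * d) / (2 * u * v)) := by
      rw [map_div₀, eq_div_iff h', mul_comm, key]
    rw [map_mul, ← hs', ← hs, sq]

lemma PowerBasis.exists_eq_add_mul_gen {F E : Type*} [Field F] [Field E] [Algebra F E]
    (pb : PowerBasis F E) (h : pb.dim = 2) (x : E) :
    ∃ u v : F, x = algebraMap F E u + algebraMap F E v * pb.gen := by
  obtain ⟨f, hf, rfl⟩ := pb.exists_eq_aeval x
  refine ⟨f.coeff 0, f.coeff 1, ?_⟩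
  rw [aeval_eq_sum_range' (hf.trans_eq h)]
  simp [Finset.sum_range_succ, Algebra.smul_def]

/-- Instance search equips `CyclotomicField 3 ℚ` with the generic `ℚ`-algebra structure
`DivisionRing.toRatAlgebra`, which agrees with the cyclotomic one only after unfolding; this
transports the Mathlib instance across that equality. -/
instance isCyclotomicExtension_three :
    IsCyclotomicExtension {3} ℚ (CyclotomicField 3 ℚ) :=
  have : NeZero ((3 : ℕ) : ℚ) := ⟨by norm_num⟩
  CyclotomicField.isCyclotomicExtension 3 ℚ

lemma finrank_cyclotomicField_three : Module.finrank ℚ (CyclotomicField 3 ℚ) = 2 := by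
  rw [IsCyclotomicExtension.finrank (n := 3) (CyclotomicField 3 ℚ)
    (cyclotomic.irreducible_rat (by norm_num))]
  decide

lemma isSquare_rat_of_cyclotomicField_three {q : ℚ}
    (hq : IsSquare (algebraMap ℚ (CyclotomicField 3 ℚ) q)) :
    IsSquare q ∨ IsSquare (q * (-3)) := by
  have hz := IsCyclotomicExtension.zeta_spec 3 ℚ (CyclotomicField 3 ℚ)
  have hpb := (hz.powerBasis ℚ).finrank.symm.trans finrank_cyclotomicField_three
  have hgen : (hz.powerBasis ℚ).gen = IsCyclotomicExtension.zeta 3 ℚ (CyclotomicField 3 ℚ) :=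
    hz.powerBasis_gen ℚ
  set z := IsCyclotomicExtension.zeta 3 ℚ (CyclotomicField 3 ℚ)
  have hz0 : z ^ 2 + z + 1 = 0 := by
    have h1 : z - 1 ≠ 0 := sub_ne_zero.2 (hz.ne_one (by norm_num))
    apply mul_left_cancel₀ h1
    linear_combination hz.pow_eq_one
  -- `2ζ₃ + 1` is a square root of `-3`.
  refine isSquare_or_isSquare_mul (s := 2 * z + 1) ?_ ?_ ?_ hq
  · simp only [map_neg, map_ofNat]
    linear_combination 4 * hz0
  · rintro ⟨r, hr⟩
    nlinarith [mul_self_nonneg r]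
  · intro x
    obtain ⟨u, v, rfl⟩ := (hz.powerBasis ℚ).exists_eq_add_mul_gen hpb x
    refine ⟨u - v / 2, v / 2, ?_⟩
    rw [hgen]
    simp only [map_sub, map_div₀, map_ofNat]
    ring

lemma not_isSquare_intCast_cyclotomicField_three {n : ℤ} (h1 : ¬ IsSquare n)
    (h2 : ¬ IsSquare (n * (-3))) : ¬ IsSquare (n : CyclotomicField 3 ℚ) := by
  intro h
  have h' : IsSquare (algebraMap ℚ (CyclotomicField 3 ℚ) n) := by simpa using h
  rcases isSquare_rat_of_cyclotomicField_three h' with h | h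
  · exact h1 (Rat.isSquare_intCast_iff.1 h)
  · exact h2 (Rat.isSquare_intCast_iff.1 (by push_cast; exact h))

lemma irreducible_cubic : Irreducible (X ^ 3 + C 2 * X ^ 2 - C 2 : ℚ[X]) := by
  have hdeg : (X ^ 3 + C 2 * X ^ 2 - C 2 : ℤ[X]).natDegree = 3 := by compute_degree!
  have hmon : (X ^ 3 + C 2 * X ^ 2 - C 2 : ℤ[X]).Monic := by monicity!
  have hcoeff : ∀ n, (X ^ 3 + C 2 * X ^ 2 - C 2 : ℤ[X]).coeff n =
      (if n = 3 then 1 else 0) + (if n = 2 then 2 else 0) - (if n = 0 then 2 else 0) := by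
    intro n
    simp only [coeff_sub, coeff_add, coeff_C_mul, coeff_X_pow, coeff_C, mul_ite, mul_one, mul_zero]
  have hE : (X ^ 3 + C 2 * X ^ 2 - C 2 : ℤ[X]).IsEisensteinAt (Ideal.span {2}) := by
    refine ⟨?_, ?_, ?_⟩
    · rw [hmon.leadingCoeff, Ideal.mem_span_singleton]
      norm_num
    · intro n hn
      rw [hdeg] at hn
      rw [Ideal.mem_span_singleton, hcoeff]
      interval_cases n <;> norm_num
    · rw [Ideal.span_singleton_pow, Ideal.mem_span_singleton, hcoeff]
      norm_num
  have hprime : (Ideal.span {(2 : ℤ)}).IsPrime :=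
    (Ideal.span_singleton_prime (by norm_num)).2 Int.prime_two
  have hirr := hE.irreducible hprime hmon.isPrimitive (by rw [hdeg]; norm_num)
  have := (hmon.irreducible_iff_irreducible_map_fraction_map (K := ℚ)).1 hirr
  convert this using 1
  simp [map_ofNat (C : ℚ →+* ℚ[X])]

/-- Let `L = ℚ(ζ₃)` and `K = L[Y]/(Y² + 22)`.  Then (a) `Y² + 22` is irreducible over `L`,
so `K` is a field containing a square root of `−22`; (b) the cubic `X³ + 2X² − 2` has no root
in `K`; and (c) `2` is not a square in `K`. -/
theorem sqrt_neg22_field_properties :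
    Irreducible (X ^ 2 + C (22 : CyclotomicField 3 ℚ)) ∧
    (AdjoinRoot.root (X ^ 2 + C (22 : CyclotomicField 3 ℚ))) ^ 2 = -22 ∧
    (∀ r : AdjoinRoot (X ^ 2 + C (22 : CyclotomicField 3 ℚ)),
      r ^ 3 + 2 * r ^ 2 - 2 ≠ 0) ∧
    ¬ IsSquare (2 : AdjoinRoot (X ^ 2 + C (22 : CyclotomicField 3 ℚ))) := by
  have hsq : ¬ IsSquare (-22 : CyclotomicField 3 ℚ) := by
    have := not_isSquare_intCast_cyclotomicField_three (n := -22) (by norm_num) (by norm_num)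
    exact_mod_cast this
  have hdeg : (X ^ 2 + C (22 : CyclotomicField 3 ℚ)).natDegree = 2 := by compute_degree!
  have hmon : (X ^ 2 + C (22 : CyclotomicField 3 ℚ)).Monic := by monicity!
  have hirr : Irreducible (X ^ 2 + C (22 : CyclotomicField 3 ℚ)) := by
    rw [hmon.irreducible_iff_roots_eq_zero_of_degree_le_three hdeg.ge (by rw [hdeg]; norm_num),
      Multiset.eq_zero_iff_forall_notMem]
    intro x hx
    have hx' := (mem_roots'.1 hx).2
    simp only [IsRoot.def, eval_add, eval_pow, eval_X, eval_C] at hx'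
    exact hsq ⟨x, by linear_combination -hx'⟩
  have hroot : (AdjoinRoot.root (X ^ 2 + C (22 : CyclotomicField 3 ℚ))) ^ 2 = -22 := by
    have h := AdjoinRoot.eval₂_root (X ^ 2 + C (22 : CyclotomicField 3 ℚ))
    rw [eval₂_add, eval₂_pow, eval₂_X, eval₂_C, map_ofNat (AdjoinRoot.of _)] at h
    linear_combination h
  have : Fact (Irreducible (X ^ 2 + C (22 : CyclotomicField 3 ℚ))) := ⟨hirr⟩
  have hdim : (AdjoinRoot.powerBasis hirr.ne_zero).dim = 2 := by
    rw [AdjoinRoot.powerBasis_dim, hdeg]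
  refine ⟨hirr, hroot, fun r hr => ?_, fun h => ?_⟩
  · have hfin : Module.finrank ℚ (AdjoinRoot (X ^ 2 + C (22 : CyclotomicField 3 ℚ))) = 4 := by
      rw [← Module.finrank_mul_finrank ℚ (CyclotomicField 3 ℚ), finrank_cyclotomicField_three,
        (AdjoinRoot.powerBasis hirr.ne_zero).finrank, hdim]
    have : FiniteDimensional ℚ (AdjoinRoot (X ^ 2 + C (22 : CyclotomicField 3 ℚ))) :=
      Module.finite_of_finrank_pos (by rw [hfin]; norm_num)
    have hmin := minpoly.eq_of_irreducible_of_monic (x := r) irreducible_cubic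
      (by simpa using hr) (by monicity!)
    have hdvd := minpoly.degree_dvd (K := ℚ) (Algebra.IsIntegral.isIntegral r)
    have h3 : (X ^ 3 + C 2 * X ^ 2 - C 2 : ℚ[X]).natDegree = 3 := by compute_degree!
    rw [← hmin, h3, hfin] at hdvd
    norm_num at hdvd
  · have hspan := (AdjoinRoot.powerBasis hirr.ne_zero).exists_eq_add_mul_gen hdim
    rw [AdjoinRoot.powerBasis_gen] at hspan
    have h2 := isSquare_or_isSquare_mul (d := -22) (c := 2)
      (by rw [hroot]; simp only [map_neg, map_ofNat]) hsq hspan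
      (by
        convert h
        exact map_ofNat (algebraMap (CyclotomicField 3 ℚ) (AdjoinRoot _)) 2)
    rcases h2 with h2 | h2
    · refine not_isSquare_intCast_cyclotomicField_three (n := 2) (by norm_num) (by norm_num) ?_
      exact_mod_cast h2
    · refine not_isSquare_intCast_cyclotomicField_three (n := -44) (by norm_num) (by norm_num) ?_
      norm_num at h2 ⊢
      exact h2
end
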